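/- arXiv:1203.2445 — 2 statements merged into one kernel-verified Lean document; each statement's English description precedes it below -/
import Mathlib

section
/- Let s > 0 and let f : [-1,1] → ℝ be a continuous function of class X^s. Then there is a constant C > 0 (depending only on f and s) such that for every n ≥ 2 the error of the n-point Clenshaw–Curtis rule satisfies |E_n^C(f)| ≤ C · n^{-s-1}. -/
/-- The `m`-th Chebyshev coefficient of `f`:
`a_m = (2/π) ∫_0^π f(cos θ) cos(mθ) dθ`. -/
noncomputable def chebCoeff (f : ℝ → ℝ) (m : ℕ) : ℝ :=
  (2 / Real.pi) * ∫ θ in (0:ℝ)..Real.pi, f (Real.cos θ) * Real.cos (m * θ)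

open Polynomial.Chebyshev

lemma cc_int_T (z : ℤ) : ∫ x in (-1:ℝ)..1, (T ℝ z).eval x =
    ∫ θ in (0:ℝ)..Real.pi, Real.cos (z * θ) * Real.sin θ := by
  have h := intervalIntegral.integral_comp_mul_deriv (a := 0) (b := Real.pi)
    (f := Real.cos) (f' := fun x => - Real.sin x) (g := fun x => (T ℝ z).eval x)
    (fun x _ => Real.hasDerivAt_cos x) (by fun_prop) (by fun_prop)
  simp only [Real.cos_zero, Real.cos_pi, Function.comp, T_real_cos] at h
  rw [intervalIntegral.integral_symm, ← h, ← intervalIntegral.integral_neg]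
  congr 1
  ext x
  ring

lemma cc_int_T_mul (z : ℤ) : ((z:ℝ)^2 - 1) * ∫ x in (-1:ℝ)..1, (T ℝ z).eval x =
    - Real.cos (z * Real.pi) - 1 := by
  rw [cc_int_T, ← intervalIntegral.integral_const_mul]
  rw [intervalIntegral.integral_eq_sub_of_hasDerivAt
    (f := fun θ : ℝ => z * (Real.sin (z * θ) * Real.sin θ) + Real.cos (z * θ) * Real.cos θ)]
  · simp
  · intro θ _
    have h1 : HasDerivAt (fun θ : ℝ => (z:ℝ) * θ) z θ := by
      simpa using (hasDerivAt_id θ).const_mul (z:ℝ)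
    have := ((h1.sin.mul (Real.hasDerivAt_sin θ)).const_mul (z:ℝ)).add
      (h1.cos.mul (Real.hasDerivAt_cos θ))
    refine this.congr_deriv ?_
    ring
  · apply Continuous.intervalIntegrable
    fun_prop

lemma cc_T_bound (z : ℤ) : |∫ x in (-1:ℝ)..1, (T ℝ z).eval x| ≤ 6 / (1 + (z:ℝ)^2) := by
  have h2 : |∫ x in (-1:ℝ)..1, (T ℝ z).eval x| ≤ 2 := by
    have := intervalIntegral.norm_integral_le_of_norm_le_const (a := -1) (b := 1) (C := 1)
      (f := fun x => (T ℝ z).eval x) (by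
        intro x hx
        rw [Set.uIoc_of_le (by norm_num)] at hx
        exact abs_eval_T_real_le_one z (abs_le.2 ⟨hx.1.le, hx.2⟩))
    rw [Real.norm_eq_abs] at this
    norm_num at this
    exact this
  have h1 := cc_int_T_mul z
  set I := ∫ x in (-1:ℝ)..1, (T ℝ z).eval x
  rw [le_div_iff₀ (by positivity)]
  have hc := abs_le.1 (Real.abs_cos_le_one (z * Real.pi))
  have h3 : |((z:ℝ)^2 + 1) * I| ≤ 6 := by
    have h4 := abs_le.1 h2
    rw [abs_le]
    constructor <;> nlinarith [hc.1, hc.2, h4.1, h4.2]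
  rw [abs_mul, abs_of_pos (by positivity)] at h3
  linarith

lemma cc_coeff (f : ℝ → ℝ) (F : C(AddCircle (2 * Real.pi), ℂ))
    (hF : ∀ θ : ℝ, F (θ : AddCircle (2 * Real.pi)) = (f (Real.cos θ) : ℂ)) 
    (hc : Continuous fun θ : ℝ => f (Real.cos θ)) [Fact (0 < 2 * Real.pi)] (n : ℤ) :
    fourierCoeff F n = ((chebCoeff f n.natAbs / 2 : ℝ) : ℂ) := by
  have hpi : (Real.pi : ℂ) ≠ 0 := by exact_mod_cast Real.pi_ne_zero
  have hx : ∀ x : ℝ, fourier (T := 2 * Real.pi) (-n) (x : AddCircle (2 * Real.pi)) • F x =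
      Complex.exp (-(n * x) * Complex.I) * (f (Real.cos x) : ℂ) := by
    intro x
    rw [fourier_coe_apply, hF, smul_eq_mul]
    congr 2
    push_cast
    field_simp
  have hcc : Continuous fun x : ℝ => (f (Real.cos x) : ℂ) :=
    Complex.continuous_ofReal.comp hc
  have hii : ∀ a b : ℝ, IntervalIntegrable (fun x : ℝ => Complex.exp (-(n * x) * Complex.I) * (f (Real.cos x) : ℂ)) MeasureTheory.volume a b := by
    intro a b
    apply Continuous.intervalIntegrable
    fun_prop
  have hii' : ∀ a b : ℝ, IntervalIntegrable (fun x : ℝ => Complex.exp (-(n * (-x : ℝ)) * Complex.I) * (f (Real.cos (-x)) : ℂ)) MeasureTheory.volume a b := by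
    intro a b
    apply Continuous.intervalIntegrable
    simp only [Real.cos_neg]
    fun_prop
  rw [fourierCoeff_eq_intervalIntegral _ _ (-Real.pi)]
  simp_rw [hx]
  rw [show -Real.pi + 2 * Real.pi = Real.pi by ring,
    ← intervalIntegral.integral_add_adjacent_intervals (hii _ 0) (hii 0 _)]
  have h1 : ∫ x in (-Real.pi)..0, Complex.exp (-(n * x) * Complex.I) * (f (Real.cos x) : ℂ) =
      ∫ x in (0:ℝ)..Real.pi, Complex.exp (-(n * (-x : ℝ)) * Complex.I) * (f (Real.cos (-x)) : ℂ) := by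
    rw [intervalIntegral.integral_comp_neg (fun x : ℝ => Complex.exp (-(n * x) * Complex.I) * (f (Real.cos x) : ℂ))]
    simp
  rw [h1, ← intervalIntegral.integral_add (hii' _ _) (hii _ _)]
  have h2 : ∀ x : ℝ, Complex.exp (-(n * (-x : ℝ)) * Complex.I) * (f (Real.cos (-x)) : ℂ) +
      Complex.exp (-(n * x) * Complex.I) * (f (Real.cos x) : ℂ) = 
      ((2 * (f (Real.cos x) * Real.cos (n.natAbs * x)) : ℝ) : ℂ) := by
    intro x
    have h3 : Real.cos (n.natAbs * x) = Real.cos (n * x) := by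
      rw [Nat.cast_natAbs]
      push_cast
      rcases abs_choice (n:ℝ) with h | h <;> rw [h]
      rw [neg_mul, Real.cos_neg]
    rw [h3, Real.cos_neg]
    push_cast
    rw [Complex.cos]
    ring_nf
  simp_rw [h2]
  rw [intervalIntegral.integral_ofReal, intervalIntegral.integral_const_mul, chebCoeff]
  rw [Complex.real_smul]
  push_cast
  field_simp

lemma cc_series (f : ℝ → ℝ) (hf : ContinuousOn f (Set.Icc (-1) 1))
    (hs : Summable fun m => |chebCoeff f m|) (x : ℝ) (hx : x ∈ Set.Icc (-1:ℝ) 1) :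
    HasSum (fun m : ℕ => chebCoeff f m * (T ℝ m).eval x) (f x + chebCoeff f 0 / 2) := by
  have : Fact (0 < 2 * Real.pi) := ⟨Real.two_pi_pos⟩
  have hF : Continuous fun θ : Real.Angle => (f θ.cos : ℂ) := by
    refine Complex.continuous_ofReal.comp (hf.comp_continuous Real.Angle.continuous_cos ?_)
    intro θ
    induction θ using Real.Angle.induction_on
    exact ⟨Real.neg_one_le_cos _, Real.cos_le_one _⟩
  have hc : Continuous fun θ : ℝ => f (Real.cos θ) :=
    hf.comp_continuous Real.continuous_cos fun θ => ⟨Real.neg_one_le_cos _, Real.cos_le_one _⟩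
  let F : C(AddCircle (2 * Real.pi), ℂ) := ⟨fun θ : Real.Angle => (f θ.cos : ℂ), hF⟩
  have hFc := cc_coeff f F (fun θ => rfl) hc
  have hsum : Summable (fourierCoeff F) := by
    have h0 : Summable fun m : ℕ => ((chebCoeff f m / 2 : ℝ) : ℂ) := by
      exact Complex.summable_ofReal.2 (hs.of_abs.div_const 2)
    apply Summable.of_nat_of_neg
    · simpa only [hFc, Int.natAbs_natCast] using h0
    · simpa only [hFc, Int.natAbs_natCast, Int.natAbs_neg] using h0
  obtain ⟨θ, hθ⟩ : ∃ θ, Real.cos θ = x := ⟨_, Real.cos_arccos hx.1 hx.2⟩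
  have h1 := (has_pointwise_sum_fourier_series_of_summable hsum (θ : AddCircle (2 * Real.pi))).nat_add_neg
  have hpi : (Real.pi : ℂ) ≠ 0 := by exact_mod_cast Real.pi_ne_zero
  have h2 : ∀ m : ℕ, fourierCoeff F (m:ℤ) • fourier (m:ℤ) (θ : AddCircle (2 * Real.pi)) + fourierCoeff F (-(m:ℤ)) • fourier (-(m:ℤ)) (θ : AddCircle (2 * Real.pi))
      = ((chebCoeff f m * (T ℝ m).eval x : ℝ) : ℂ) := by
    intro m
    rw [hFc, hFc, Int.natAbs_neg, Int.natAbs_natCast, fourier_coe_apply, fourier_coe_apply, ← hθ, T_real_cos]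
    push_cast
    rw [Complex.cos]
    have e1 : 2 * (Real.pi:ℂ) * Complex.I * m * θ / (2 * Real.pi) = m * θ * Complex.I := by
      field_simp
    have e2 : 2 * (Real.pi:ℂ) * Complex.I * (-m) * θ / (2 * Real.pi) = - (m * θ) * Complex.I := by
      field_simp
    rw [e1, e2]
    simp only [smul_eq_mul]
    ring
  simp_rw [h2] at h1
  rw [← Complex.hasSum_ofReal]
  convert h1 using 1
  rw [hFc, ← hθ]
  have : F (θ : AddCircle (2 * Real.pi)) = (f (Real.cos θ) : ℂ) := rfl
  rw [this]
  simp

/-- The error of the series is the series of the errors. -/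
lemma cc_err (f : ℝ → ℝ) (hf : ContinuousOn f (Set.Icc (-1) 1))
    (hs : Summable fun m => |chebCoeff f m|) (n : ℕ) (w x : Fin n → ℝ)
    (hx : ∀ k, x k ∈ Set.Icc (-1:ℝ) 1)
    (h1 : ∑ k, w k = 2) :
    HasSum (fun m : ℕ => chebCoeff f m *
      ((∫ t in (-1:ℝ)..1, (T ℝ m).eval t) - ∑ k, w k * (T ℝ m).eval (x k)))
      ((∫ t in (-1:ℝ)..1, f t) - ∑ k, w k * f (x k)) := by
  have hI : HasSum (fun m : ℕ => ∫ t in (-1:ℝ)..1, chebCoeff f m * (T ℝ m).eval t)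
      (∫ t in (-1:ℝ)..1, (f t + chebCoeff f 0 / 2)) := by
    have huI : Set.uIoc (-1:ℝ) 1 = Set.Ioc (-1) 1 := Set.uIoc_of_le (by norm_num)
    apply intervalIntegral.hasSum_integral_of_dominated_convergence
      (fun m _ => |chebCoeff f m|)
    · intro m
      apply Continuous.aestronglyMeasurable
      fun_prop
    · intro m
      refine Filter.Eventually.of_forall fun t ht => ?_
      rw [huI] at ht
      rw [Real.norm_eq_abs, abs_mul]
      exact mul_le_of_le_one_right (abs_nonneg _)
        (abs_eval_T_real_le_one _ (abs_le.2 ⟨ht.1.le, ht.2⟩))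
    · exact Filter.Eventually.of_forall fun t ht => hs
    · exact intervalIntegrable_const
    · refine Filter.Eventually.of_forall fun t ht => ?_
      rw [huI] at ht
      exact cc_series f hf hs t ⟨ht.1.le, ht.2⟩
  have hfi : IntervalIntegrable f MeasureTheory.volume (-1) 1 := by
    apply ContinuousOn.intervalIntegrable
    rwa [Set.uIcc_of_le (by norm_num)]
  rw [intervalIntegral.integral_add hfi intervalIntegrable_const] at hI
  have hQ : HasSum (fun m : ℕ => ∑ k, w k * (chebCoeff f m * (T ℝ m).eval (x k)))
      (∑ k, w k * (f (x k) + chebCoeff f 0 / 2)) :=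
    hasSum_sum fun k _ => (cc_series f hf hs (x k) (hx k)).mul_left (w k)
  have e : (∫ t in (-1:ℝ)..1, f t) - ∑ k, w k * f (x k) =
      ((∫ t in (-1:ℝ)..1, f t) + ∫ t in (-1:ℝ)..1, chebCoeff f 0 / 2) -
        ∑ k, w k * (f (x k) + chebCoeff f 0 / 2) := by
    simp_rw [mul_add]
    rw [Finset.sum_add_distrib, ← Finset.sum_mul, h1, intervalIntegral.integral_const, smul_eq_mul]
    ring
  rw [e]
  refine Eq.mp (congrArg (fun g => HasSum g _) (funext fun m => ?_)) (hI.sub hQ)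
  symm
  rw [mul_sub, intervalIntegral.integral_const_mul, Finset.mul_sum]
  congr 1
  exact Finset.sum_congr rfl fun k _ => by ring

lemma cc_summable_int : Summable fun z : ℤ => 1 / (1 + (z:ℝ)^2) := by
  have h0 : Summable fun m : ℕ => 1 / (1 + (m:ℝ)^2) := by
    rw [← summable_nat_add_iff 1]
    have h := (summable_nat_add_iff 1).2 (Real.summable_one_div_nat_pow.2 (by norm_num : 1 < 2))
    refine Summable.of_nonneg_of_le (fun m => by positivity) (fun m => ?_) h
    apply one_div_le_one_div_of_le (by positivity)
    linarith
  apply Summable.of_nat_of_neg <;> simpa using h0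

/-- Error on `T_m`, by aliasing. -/
lemma cc_alias (N : ℕ) (hN : 1 ≤ N) (w : Fin (N + 1) → ℝ)
    (hw : ∀ p : Polynomial ℝ, p.natDegree ≤ N →
        ∑ k : Fin (N + 1), w k * p.eval (Real.cos ((k : ℝ) * Real.pi / N)) =
          ∫ x in (-1:ℝ)..1, p.eval x) (j i : ℕ) (hi : i < 2 * N) :
    |(∫ t in (-1:ℝ)..1, (T ℝ ((j * (2 * N) + i + N : ℕ) : ℤ)).eval t) -
      ∑ k : Fin (N + 1), w k * (T ℝ ((j * (2 * N) + i + N : ℕ) : ℤ)).eval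
        (Real.cos ((k : ℝ) * Real.pi / N))| ≤ 12 * (1 / (1 + (((i:ℤ) - N : ℤ) : ℝ)^2)) := by
  have hN0 : (N:ℝ) ≠ 0 := by positivity
  have h1 : ∑ k : Fin (N + 1), w k * (T ℝ ((j * (2 * N) + i + N : ℕ) : ℤ)).eval
        (Real.cos ((k : ℝ) * Real.pi / N)) = ∫ t in (-1:ℝ)..1, (T ℝ ((i:ℤ) - N)).eval t := by
    rw [← hw _ (by rw [natDegree_T]; omega)]
    refine Finset.sum_congr rfl fun k _ => ?_
    rw [T_real_cos, T_real_cos]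
    congr 1
    rw [← Real.cos_add_nat_mul_two_pi ((((i:ℤ) - N : ℤ) : ℝ) * _) ((j + 1) * k)]
    congr 1
    push_cast
    field_simp
    ring
  rw [h1]
  have hz := cc_T_bound ((i:ℤ) - N)
  have hm := cc_T_bound ((j * (2 * N) + i + N : ℕ) : ℤ)
  have hle : 6 / (1 + (((j * (2 * N) + i + N : ℕ) : ℤ) : ℝ)^2) ≤
      6 / (1 + (((i:ℤ) - N : ℤ) : ℝ)^2) := by
    gcongr 6 / (1 + ?_)
    apply sq_le_sq'
    · have : (0:ℝ) ≤ j * (2 * N) := by positivity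
      push_cast
      have : (0:ℝ) ≤ i := by positivity
      linarith
    · have : (0:ℝ) ≤ j * (2 * N) := by positivity
      push_cast
      have : (0:ℝ) ≤ N := by positivity
      linarith
  have := abs_sub (∫ t in (-1:ℝ)..1, (T ℝ ((j * (2 * N) + i + N : ℕ) : ℤ)).eval t)
    (∫ t in (-1:ℝ)..1, (T ℝ ((i:ℤ) - N)).eval t)
  have e : 12 * (1 / (1 + (((i:ℤ) - N : ℤ) : ℝ)^2)) =
    6 / (1 + (((i:ℤ) - N : ℤ) : ℝ)^2) + 6 / (1 + (((i:ℤ) - N : ℤ) : ℝ)^2) := by ring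
  rw [e]
  linarith

set_option maxHeartbeats 1600000 in
theorem clenshaw_curtis_rate (s : ℝ) (hs : 0 < s) (f : ℝ → ℝ)
    (hf : ContinuousOn f (Set.Icc (-1) 1))
    (hXs : ∃ A : ℝ, ∀ m : ℕ, 1 ≤ m → |chebCoeff f m| ≤ A * (m : ℝ) ^ (-s - 1)) :
    ∃ C > 0, ∀ n : ℕ, 2 ≤ n → ∀ w : Fin n → ℝ,
      (∀ p : Polynomial ℝ, p.natDegree ≤ n - 1 →
        ∑ k : Fin n, w k * p.eval (Real.cos ((k : ℝ) * Real.pi / ((n : ℝ) - 1))) =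
          ∫ x in (-1:ℝ)..1, p.eval x) →
      |(∫ x in (-1:ℝ)..1, f x) -
          ∑ k : Fin n, w k * f (Real.cos ((k : ℝ) * Real.pi / ((n : ℝ) - 1)))| ≤
        C * (n : ℝ) ^ (-s - 1) := by
  obtain ⟨A, hA⟩ := hXs
  have hA0 : 0 ≤ A := by
    have := hA 1 le_rfl
    simp at this
    exact (abs_nonneg _).trans this
  have hsr : Summable fun j : ℕ => ((j + 1 : ℕ) : ℝ) ^ (-s - 1) :=
    (summable_nat_add_iff 1).2 (Real.summable_nat_rpow.2 (by linarith : -s - 1 < -1))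
  have hsum : Summable fun m => |chebCoeff f m| := by
    rw [← summable_nat_add_iff 1]
    exact Summable.of_nonneg_of_le (fun m => abs_nonneg _) (fun m => hA (m + 1) (by omega))
      (hsr.mul_left A)
  set K1 := ∑' j : ℕ, ((j + 1 : ℕ) : ℝ) ^ (-s - 1) with hK1
  set K2 := ∑' z : ℤ, 1 / (1 + (z:ℝ)^2) with hK2
  have hK10 : 0 ≤ K1 := tsum_nonneg fun j => by positivity
  have hK20 : 0 ≤ K2 := tsum_nonneg fun j => by positivity
  refine ⟨A * 12 * K1 * K2 * 2 ^ (s + 1) + 1, by positivity, ?_⟩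
  intro n hn w hw
  obtain ⟨N, rfl⟩ : ∃ N, n = N + 1 := ⟨n - 1, by omega⟩
  have hN : 1 ≤ N := by omega
  have hNN : ((N + 1 : ℕ) : ℝ) - 1 = N := by push_cast; ring
  rw [hNN] at hw ⊢
  rw [Nat.add_sub_cancel] at hw
  have h1 : ∑ k, w k = 2 := by
    have := hw 1 (by simp)
    simp at this
    rw [this]; norm_num
  have hE := cc_err f hf hsum (N + 1) w (fun k => Real.cos ((k : ℝ) * Real.pi / N))
    (fun k => ⟨Real.neg_one_le_cos _, Real.cos_le_one _⟩) h1
  have hz : ∑ m ∈ Finset.range N, chebCoeff f m *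
      ((∫ t in (-1:ℝ)..1, (T ℝ m).eval t) -
        ∑ k : Fin (N + 1), w k * (T ℝ m).eval (Real.cos ((k : ℝ) * Real.pi / N))) = 0 := by
    apply Finset.sum_eq_zero
    intro m hm
    rw [hw _ (by rw [natDegree_T]; simp at hm ⊢; omega)]
    simp
  rw [← hasSum_nat_add_iff' N, hz, sub_zero] at hE
  have : NeZero (2 * N) := ⟨by omega⟩
  rw [← (Nat.divModEquiv (2 * N)).symm.hasSum_iff] at hE
  -- the majorant
  have hsf : Summable fun i : Fin (2 * N) => 1 / (1 + ((((i:ℕ):ℤ) - N : ℤ) : ℝ)^2) :=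
    (hasSum_fintype _).summable
  have hmaj := (hsr.hasSum.mul (hasSum_fintype fun i : Fin (2 * N) =>
    1 / (1 + ((((i:ℕ):ℤ) - N : ℤ) : ℝ)^2))
    (hsr.mul_of_nonneg hsf (fun j => by positivity) (fun i => by positivity))).mul_left
      (A * 12 * (N:ℝ) ^ (-s - 1))
  have hb := hE.norm_le_of_bounded hmaj (by
    rintro ⟨j, i⟩
    have ha := hA (j * (2 * N) + i + N) (by omega)
    have hT := cc_alias N hN w hw j i i.2
    have hp : ((j * (2 * N) + i + N : ℕ) : ℝ) ^ (-s - 1) ≤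
        (N:ℝ) ^ (-s - 1) * ((j + 1 : ℕ) : ℝ) ^ (-s - 1) := by
      rw [← Real.mul_rpow (by positivity) (by positivity)]
      apply Real.rpow_le_rpow_of_nonpos (by positivity) _ (by linarith)
      norm_cast
      nlinarith [Nat.zero_le (j * N)]
    simp only [Function.comp, Nat.divModEquiv_symm_apply]
    rw [Real.norm_eq_abs, abs_mul]
    calc _ ≤ (A * ((N:ℝ) ^ (-s - 1) * ((j + 1 : ℕ) : ℝ) ^ (-s - 1))) *
          (12 * (1 / (1 + ((((i:ℕ):ℤ) - N : ℤ) : ℝ)^2))) := by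
          apply mul_le_mul (ha.trans (by gcongr)) hT (abs_nonneg _) (by positivity)
      _ = _ := by ring)
  rw [Real.norm_eq_abs] at hb
  have hfin : ∑ i : Fin (2 * N), 1 / (1 + ((((i:ℕ):ℤ) - N : ℤ) : ℝ)^2) ≤ K2 := by
    have hinj : Function.Injective fun i : Fin (2 * N) => ((i:ℕ):ℤ) - (N:ℤ) := by
      intro a b h
      simp at h
      omega
    rw [← tsum_fintype (L := .unconditional _)]
    exact Summable.tsum_le_tsum_of_inj _ hinj (fun z _ => by positivity) (fun i => le_rfl)
      hsf cc_summable_int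
  have hpow : (N:ℝ) ^ (-s - 1) ≤ 2 ^ (s + 1) * ((N + 1 : ℕ) : ℝ) ^ (-s - 1) := by
    have h2 : (2:ℝ) ^ (s + 1) = (1 / 2) ^ (-s - 1) := by
      rw [one_div, Real.inv_rpow (by norm_num), ← Real.rpow_neg (by norm_num)]
      congr 1; ring
    rw [h2, ← Real.mul_rpow (by norm_num) (by positivity)]
    apply Real.rpow_le_rpow_of_nonpos (by positivity) _ (by linarith)
    have : (1:ℝ) ≤ N := by exact_mod_cast hN
    push_cast
    linarith
  refine hb.trans ?_
  calc _ ≤ A * 12 * (2 ^ (s + 1) * ((N + 1 : ℕ) : ℝ) ^ (-s - 1)) * (K1 * K2) := by gcongr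
    _ = (A * 12 * K1 * K2 * 2 ^ (s + 1)) * ((N + 1 : ℕ) : ℝ) ^ (-s - 1) := by ring
    _ ≤ _ := by gcongr; linarith
end

section
/- Let s ≥ 2 and let f : [-1,1] → ℝ be a continuous function of class X^s. Then there is a constant C > 0 (depending only on f and s) such that for every n ≥ 1 the error of the n-point Gauss rule satisfies |E_n^G(f)| ≤ C · n^{-s-1}. -/
open Polynomial in
/-- The integral functional on polynomials. -/
noncomputable def polyInt : Polynomial ℝ →ₗ[ℝ] ℝ where
  toFun p := ∫ t in (-1:ℝ)..1, p.eval t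
  map_add' p q := by
    simp only [Polynomial.eval_add]
    exact intervalIntegral.integral_add (p.continuous.intervalIntegrable _ _)
      (q.continuous.intervalIntegrable _ _)
  map_smul' c p := by
    simp [Polynomial.eval_smul]

lemma polyInt_apply (p : Polynomial ℝ) : polyInt p = ∫ t in (-1:ℝ)..1, p.eval t := rfl

lemma polyInt_C_mul (c : ℝ) (p : Polynomial ℝ) : polyInt (Polynomial.C c * p) = c * polyInt p := by
  rw [← Polynomial.smul_eq_C_mul, map_smul, smul_eq_mul]

lemma polyInt_derivative (p : Polynomial ℝ) :
    polyInt (Polynomial.derivative p) = p.eval 1 - p.eval (-1) := by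
  rw [polyInt_apply]
  exact intervalIntegral.integral_eq_sub_of_hasDerivAt (fun x _ => p.hasDerivAt x)
    (p.derivative.continuous.intervalIntegrable _ _)

lemma polyInt_comp_neg (p : Polynomial ℝ) : polyInt (p.comp (-Polynomial.X)) = polyInt p := by
  rw [polyInt_apply, polyInt_apply]
  simp only [Polynomial.eval_comp, Polynomial.eval_neg, Polynomial.eval_X]
  rw [intervalIntegral.integral_comp_neg (fun t => p.eval t)]
  simp

lemma polyInt_sq_pos (p : Polynomial ℝ) (hp : p ≠ 0) : 0 < polyInt (p * p) := by
  rw [polyInt_apply]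
  obtain ⟨c, hc, hpc⟩ : ∃ c ∈ Set.Icc (-1:ℝ) 1, p.eval c ≠ 0 := by
    by_contra! h
    apply hp
    apply Polynomial.eq_zero_of_infinite_isRoot
    exact (Set.Icc_infinite (by norm_num : (-1:ℝ) < 1)).mono fun c hc => h c hc
  apply intervalIntegral.integral_pos (by norm_num) ((p * p).continuous.continuousOn)
  · intro x _
    simp only [Polynomial.eval_mul]
    exact mul_self_nonneg _
  · refine ⟨c, hc, ?_⟩
    simp only [Polynomial.eval_mul]
    exact mul_self_pos.2 hpc

section rule
open Polynomial

/-- Gauss rule hypothesis -/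
structure IsGauss (n : ℕ) (x w : Fin n → ℝ) : Prop where
  hx : ∀ k, x k ∈ Set.Icc (-1:ℝ) 1
  hw : ∀ k, 0 < w k
  ex : ∀ p : Polynomial ℝ, p.natDegree ≤ 2 * n - 1 →
        ∑ k : Fin n, w k * p.eval (x k) = polyInt p

/-- node polynomial -/
noncomputable def nodeP {n : ℕ} (x : Fin n → ℝ) : ℝ[X] := ∏ k, (X - C (x k))

lemma nodeP_monic {n : ℕ} (x : Fin n → ℝ) : (nodeP x).Monic :=
  monic_prod_of_monic _ _ fun _ _ => monic_X_sub_C _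

lemma nodeP_natDegree {n : ℕ} (x : Fin n → ℝ) : (nodeP x).natDegree = n := by
  rw [nodeP, natDegree_prod_of_monic _ _ fun _ _ => monic_X_sub_C _]
  simp

lemma nodeP_eval {n : ℕ} (x : Fin n → ℝ) (k : Fin n) : (nodeP x).eval (x k) = 0 := by
  rw [nodeP, eval_prod]
  exact Finset.prod_eq_zero (Finset.mem_univ k) (by simp)

lemma nodeP_root {n : ℕ} (x : Fin n → ℝ) (t : ℝ) (h : (nodeP x).eval t = 0) : ∃ k, t = x k := by
  rw [nodeP, eval_prod, Finset.prod_eq_zero_iff] at h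
  obtain ⟨k, _, hk⟩ := h
  exact ⟨k, by simpa [sub_eq_zero] using hk⟩

variable {n : ℕ} {x w : Fin n → ℝ}

lemma IsGauss.orth (h : IsGauss n x w) (hn : 1 ≤ n) (g : ℝ[X]) (hg : g.degree < n) :
    polyInt (nodeP x * g) = 0 := by
  rw [← h.ex]
  · simp [nodeP_eval]
  · have h1 := natDegree_mul_le (p := nodeP x) (q := g)
    rw [nodeP_natDegree] at h1
    have h2 : g.natDegree < n := by
      rcases eq_or_ne g 0 with rfl | h0
      · simp; omega
      · exact (natDegree_lt_iff_degree_lt h0).2 hg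
    omega

lemma IsGauss.inj (h : IsGauss n x w) (hn : 1 ≤ n) : Function.Injective x := by
  classical
  by_contra hi
  have hcard : (Finset.univ.image x).card < n := by
    refine lt_of_le_of_ne ?_ ?_
    · simpa using Finset.card_image_le (s := Finset.univ) (f := x)
    · intro hc
      apply hi
      rw [← Set.injOn_univ, ← Finset.coe_univ]
      apply Finset.injOn_of_card_image_eq
      simpa using hc
  set G : ℝ[X] := ∏ a ∈ Finset.univ.image x, (X - C a) with hG
  have hGm : G.Monic := monic_prod_of_monic _ _ fun _ _ => monic_X_sub_C _
  have hGd : G.natDegree = (Finset.univ.image x).card := by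
    rw [hG, natDegree_prod_of_monic _ _ fun _ _ => monic_X_sub_C _]; simp
  have h1 := polyInt_sq_pos G hGm.ne_zero
  rw [← h.ex] at h1
  · have : ∀ k, G.eval (x k) = 0 := by
      intro k
      rw [hG, eval_prod]
      exact Finset.prod_eq_zero (Finset.mem_image_of_mem x (Finset.mem_univ k)) (by simp)
    simp [this] at h1
  · rw [hGm.natDegree_mul hGm, hGd]; omega

/-- uniqueness helper -/
lemma IsGauss.eq_zero_of_orth (g : ℝ[X])
    (ho : polyInt (g * g) = 0) : g = 0 := by
  by_contra h0
  exact (polyInt_sq_pos g h0).ne' ho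

lemma nodeP_coeff_gt (x : Fin n → ℝ) (k : ℕ) (hk : n < k) : (nodeP x).coeff k = 0 :=
  coeff_eq_zero_of_natDegree_lt (by rwa [nodeP_natDegree])

lemma nodeP_coeff_self (x : Fin n → ℝ) : (nodeP x).coeff n = 1 := by
  have := nodeP_monic x
  rw [Monic, leadingCoeff, nodeP_natDegree] at this
  exact this

lemma coeff_X_mul_derivative (p : ℝ[X]) (k : ℕ) : (X * derivative p).coeff k = k * p.coeff k := by
  cases k with
  | zero => simp
  | succ k => rw [coeff_X_mul, coeff_derivative]; push_cast; ring

lemma coeff_X_sq_mul_derivative (p : ℝ[X]) (k : ℕ) :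
    (X ^ 2 * derivative (derivative p)).coeff k = k * (k - 1) * p.coeff k := by
  have : X ^ 2 * derivative (derivative p) = X * derivative (X * derivative p) - X * derivative p := by
    simp [derivative_mul]; ring
  rw [this, coeff_sub, coeff_X_mul_derivative, coeff_X_mul_derivative]; ring

lemma coeff_dd (p : ℝ[X]) (k : ℕ) :
    (derivative (derivative p)).coeff k = (k + 1) * (k + 2) * p.coeff (k + 2) := by
  rw [coeff_derivative, coeff_derivative]; push_cast; ring

lemma legOp_degree (g : ℝ[X]) (hg : g.degree < n) :
    (derivative ((1 - X ^ 2) * derivative g)).degree < n := by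
  have : derivative ((1 - X ^ 2) * derivative g) = derivative (derivative g)
      - X ^ 2 * derivative (derivative g) - 2 * (X * derivative g) := by
    simp [derivative_mul]; ring
  rw [degree_lt_iff_coeff_zero] at hg ⊢
  intro k hk
  have h2 : (2 : ℝ[X]) = C 2 := rfl
  rw [this, coeff_sub, coeff_sub, coeff_dd, coeff_X_sq_mul_derivative, h2, coeff_C_mul,
    coeff_X_mul_derivative, hg k hk, hg (k+2) (by omega)]
  ring

/-- Legendre ODE for the node polynomial -/
lemma IsGauss.ode (h : IsGauss n x w) (hn : 1 ≤ n) :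
    derivative ((1 - X ^ 2) * derivative (nodeP x)) + C ((n:ℝ) * (n + 1)) * nodeP x = 0 := by
  set P := nodeP x with hP
  set D := derivative ((1 - X ^ 2) * derivative P) + C ((n:ℝ) * (n + 1)) * P with hD
  have hDd : D.degree < n := by
    have : D = derivative (derivative P)
      - X ^ 2 * derivative (derivative P) - C 2 * (X * derivative P) + C ((n:ℝ) * (n + 1)) * P := by
      have h2 : (C 2 : ℝ[X]) = 2 := rfl
      rw [hD, h2]
      simp [derivative_mul]; ring
    rw [degree_lt_iff_coeff_zero]
    intro k hk
    rw [this, coeff_add, coeff_sub, coeff_sub, coeff_dd, coeff_X_sq_mul_derivative, coeff_C_mul,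
      coeff_X_mul_derivative, coeff_C_mul, hP, nodeP_coeff_gt x (k+2) (by omega)]
    rcases eq_or_lt_of_le hk with rfl | hk
    · rw [nodeP_coeff_self]; ring
    · rw [nodeP_coeff_gt x k hk]; ring
  apply IsGauss.eq_zero_of_orth
  have key : D * D = derivative ((1 - X ^ 2) * (derivative P * D - P * derivative D))
      + P * derivative ((1 - X ^ 2) * derivative D) + C ((n:ℝ) * (n + 1)) * (P * D) := by
    nth_rewrite 1 [hD]
    simp only [derivative_mul, derivative_sub]
    ring
  rw [key, map_add, map_add, polyInt_derivative, polyInt_C_mul, h.orth hn _ hDd,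
    h.orth hn _ (legOp_degree D hDd)]
  simp

lemma coeff_comp_negX (p : ℝ[X]) (k : ℕ) : (p.comp (-X)).coeff k = (-1) ^ k * p.coeff k := by
  have : (-X : ℝ[X]) = C (-1) * X := by simp
  rw [this, comp_C_mul_X_coeff, mul_comm]

lemma IsGauss.symm_poly (h : IsGauss n x w) (hn : 1 ≤ n) :
    (nodeP x).comp (-X) = C ((-1) ^ n) * nodeP x := by
  set P := nodeP x with hP
  have hco : ∀ k, (P.comp (-X)).coeff k = (-1) ^ k * P.coeff k := by
    intro k
    exact coeff_comp_negX P k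
  rw [← sub_eq_zero]
  set D := P.comp (-X) - C ((-1) ^ n) * P with hD
  have hDd : D.degree < n := by
    rw [degree_lt_iff_coeff_zero]
    intro k hk
    rw [hD, coeff_sub, hco, coeff_C_mul]
    rcases eq_or_lt_of_le hk with rfl | hk
    · ring
    · rw [hP, nodeP_coeff_gt x k hk]; ring
  have hDd2 : (D.comp (-X)).degree < n := by
    rw [degree_lt_iff_coeff_zero] at hDd ⊢
    intro k hk
    rw [coeff_comp_negX, hDd k hk]; ring
  apply IsGauss.eq_zero_of_orth
  have key : D * D = (P * D.comp (-X)).comp (-X) - C ((-1) ^ n) * (P * D) := by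
    have : (D.comp (-X)).comp (-X) = D := by
      rw [comp_assoc]; simp
    rw [mul_comp, this]
    nth_rewrite 1 [hD]
    ring
  rw [key, map_sub, polyInt_comp_neg, polyInt_C_mul, h.orth hn _ hDd, h.orth hn _ hDd2]
  simp

lemma IsGauss.symm (h : IsGauss n x w) (hn : 1 ≤ n) (k : Fin n) : ∃ j, x j = - x k := by
  have := congrArg (eval (x k)) (h.symm_poly hn)
  simp [nodeP_eval] at this
  obtain ⟨j, hj⟩ := nodeP_root x _ this
  exact ⟨j, hj.symm⟩

lemma IsGauss.weight (h : IsGauss n x w) (hn : 1 ≤ n) (k : Fin n) :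
    (1 - x k ^ 2) * w k * ((derivative (nodeP x)).eval (x k)) ^ 2
      = (2 * n + 1) * polyInt (nodeP x * nodeP x) := by
  classical
  set P := nodeP x with hP
  set a := x k with ha
  set g : ℝ[X] := ∏ j ∈ Finset.univ.erase k, (X - C (x j)) with hg
  have hPg : P = (X - C a) * g := by
    rw [hP, nodeP, hg, ← Finset.mul_prod_erase Finset.univ _ (Finset.mem_univ k)]
  have hgm : g.Monic := monic_prod_of_monic _ _ fun _ _ => monic_X_sub_C _
  have hgd : g.natDegree = n - 1 := by
    rw [hg, natDegree_prod_of_monic _ _ fun _ _ => monic_X_sub_C _]; simp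
  have hdP : derivative P = g + (X - C a) * derivative g := by
    rw [hPg]; simp [derivative_mul]
  have hP'a : (derivative P).eval a = g.eval a := by rw [hdP]; simp
  have hgj : ∀ j, j ≠ k → g.eval (x j) = 0 := by
    intro j hj
    rw [hg, eval_prod]
    exact Finset.prod_eq_zero (Finset.mem_erase.2 ⟨hj, Finset.mem_univ j⟩) (by simp)
  have hgdeg : g.degree < n := by
    rw [← natDegree_lt_iff_degree_lt hgm.ne_zero, hgd]; omega
  have q1 : ∀ q : ℝ[X], q.natDegree ≤ n → polyInt (q * g) = w k * (q.eval a * g.eval a) := by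
    intro q hq
    rw [← h.ex, Finset.sum_eq_single k]
    · simp [ha]
    · intro j _ hj; simp [hgj j hj]
    · simp
    · have := natDegree_mul_le (p := q) (q := g)
      omega
  have e1 : polyInt (g * g) = w k * g.eval a ^ 2 := by
    rw [q1 g (by omega)]; ring
  have hX : polyInt (P * (X * derivative P)) = n * polyInt (P * P) := by
    have hd : (X * derivative P - C (n:ℝ) * P).degree < (n : WithBot ℕ) := by
      rw [degree_lt_iff_coeff_zero]
      intro j hj
      rw [coeff_sub, coeff_X_mul_derivative, coeff_C_mul]
      rcases eq_or_lt_of_le hj with rfl | hk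
      · ring
      · rw [hP, nodeP_coeff_gt x j hk]; ring
    have := h.orth hn _ hd
    rw [mul_sub, map_sub, sub_eq_zero] at this
    rw [this, ← polyInt_C_mul]
    congr 1; ring
  have hP'd : (derivative P).degree < n := by
    rw [degree_lt_iff_coeff_zero]
    intro j hj
    rw [coeff_derivative, hP, nodeP_coeff_gt x (j+1) (by omega)]; ring
  have o1 : polyInt (P * g) = 0 := h.orth hn _ hgdeg
  have o2 : polyInt (P * derivative P) = 0 := h.orth hn _ hP'd
  have e2 : polyInt (derivative P * g) = w k * g.eval a ^ 2 := by
    rw [q1 _ (by rw [hP]; have := natDegree_derivative_le (nodeP x); rw [nodeP_natDegree] at this; omega), hP'a]; ring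
  have key : derivative ((1 - X ^ 2) * ((X - C a) * (g * g))) =
      - (C (1 - a ^ 2) * (g * g)) + C (2 * (1 - a ^ 2)) * (derivative P * g) - P * P
        - C 2 * (P * (X * derivative P)) - C (2 * a) * (P * derivative P) := by
    rw [hdP, hPg]
    have h2 : (C 2 : ℝ[X]) = 2 := rfl
    simp only [derivative_mul, derivative_sub, C_mul, C_sub, C_pow, C_1, h2, derivative_X,
      derivative_C, derivative_X_pow, derivative_one]
    simp only [Nat.cast_ofNat, h2]
    ring
  have := congrArg polyInt key
  rw [polyInt_derivative, map_sub, map_sub, map_sub, map_add, map_neg, polyInt_C_mul, polyInt_C_mul,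
    polyInt_C_mul, polyInt_C_mul, e1, e2, o2, hX] at this
  simp at this
  rw [hP'a]
  linarith
end rule

lemma sturm_lower (y yd Q : ℝ → ℝ) (a b ω : ℝ) (hab : a < b) (hω : 0 < ω)
    (hy : ∀ t ∈ Set.Icc a b, HasDerivAt y (yd t) t)
    (hyd : ∀ t ∈ Set.Icc a b, HasDerivAt yd (-(Q t * y t)) t)
    (ha : y a = 0) (hb : y b = 0) (hpos : ∀ t ∈ Set.Ioo a b, 0 < y t) (hb' : yd b ≠ 0)
    (hQ : ∀ t ∈ Set.Icc a b, Q t ≤ ω ^ 2) : Real.pi / ω ≤ b - a := by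
  by_contra! hlt
  have hωb : ω * (b - a) < Real.pi := by
    rw [lt_div_iff₀ hω] at hlt; linarith
  set W : ℝ → ℝ := fun t => yd t * Real.sin (ω * (t - a)) - ω * (y t * Real.cos (ω * (t - a))) with hW
  have hlin : ∀ t, HasDerivAt (fun t => ω * (t - a)) ω t := fun t => by
    simpa using ((hasDerivAt_id t).sub_const a).const_mul ω
  have hWd : ∀ t ∈ Set.Icc a b, HasDerivAt W ((ω ^ 2 - Q t) * (y t * Real.sin (ω * (t - a)))) t := by
    intro t ht
    have h1 := ((hyd t ht).mul (hlin t).sin).sub (((hy t ht).mul (hlin t).cos).const_mul ω)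
    refine h1.congr_deriv ?_
    ring
  have hmono : MonotoneOn W (Set.Icc a b) := by
    apply monotoneOn_of_deriv_nonneg (convex_Icc a b)
    · exact fun t ht => (hWd t ht).continuousAt.continuousWithinAt
    · intro t ht
      rw [interior_Icc] at ht
      exact (hWd t (Set.Ioo_subset_Icc_self ht)).differentiableAt.differentiableWithinAt
    · intro t ht
      rw [interior_Icc] at ht
      rw [(hWd t (Set.Ioo_subset_Icc_self ht)).deriv]
      have h1 := hQ t (Set.Ioo_subset_Icc_self ht)
      have h2 := hpos t ht
      have h3 : 0 ≤ Real.sin (ω * (t - a)) := by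
        apply Real.sin_nonneg_of_nonneg_of_le_pi
        · exact mul_nonneg hω.le (by linarith [ht.1])
        · nlinarith [ht.2]
      exact mul_nonneg (by linarith) (mul_nonneg h2.le h3)
  have h1 := hmono (Set.left_mem_Icc.2 hab.le) (Set.right_mem_Icc.2 hab.le) hab.le
  simp only [hW, ha, hb, sub_self, mul_zero, Real.sin_zero, zero_mul] at h1
  have hs : 0 < Real.sin (ω * (b - a)) :=
    Real.sin_pos_of_pos_of_lt_pi (mul_pos hω (by linarith)) hωb
  have h2 : 0 ≤ yd b := by
    by_contra! h; nlinarith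
  have h3 : 0 < yd b := lt_of_le_of_ne h2 (Ne.symm hb')
  have h4 := (hasDerivAt_iff_tendsto_slope.1 (hy b (Set.right_mem_Icc.2 hab.le))).mono_left
    (nhdsWithin_mono b (fun t (ht : t ∈ Set.Iio b) => ne_of_lt ht))
  have h5 : yd b ≤ 0 := by
    apply le_of_tendsto h4
    filter_upwards [Ioo_mem_nhdsLT hab] with t ht
    rw [slope_def_field, hb, sub_zero]
    exact div_nonpos_of_nonneg_of_nonpos (hpos t ht).le (by linarith [ht.2])
  linarith

lemma sturm_upper (y yd Q : ℝ → ℝ) (a b ω : ℝ) (hω : 0 < ω)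
    (hy : ∀ t ∈ Set.Icc a b, HasDerivAt y (yd t) t)
    (hyd : ∀ t ∈ Set.Icc a b, HasDerivAt yd (-(Q t * y t)) t)
    (ha : y a = 0) (hpos : ∀ t ∈ Set.Ioo a b, 0 < y t)
    (hQ : ∀ t ∈ Set.Icc a b, ω ^ 2 ≤ Q t) : b - a ≤ Real.pi / ω := by
  by_contra! hlt
  set c := a + Real.pi / ω with hc
  have hpo : 0 < Real.pi / ω := div_pos Real.pi_pos hω
  have hac : a < c := by linarith
  have hcb : c < b := by linarith
  have hsub : Set.Icc a c ⊆ Set.Icc a b := Set.Icc_subset_Icc_right hcb.le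
  have hωc : ω * (c - a) = Real.pi := by
    rw [hc]; field_simp; ring
  set W : ℝ → ℝ := fun t => yd t * Real.sin (ω * (t - a)) - ω * (y t * Real.cos (ω * (t - a))) with hW
  have hlin : ∀ t, HasDerivAt (fun t => ω * (t - a)) ω t := fun t => by
    simpa using ((hasDerivAt_id t).sub_const a).const_mul ω
  have hWd : ∀ t ∈ Set.Icc a c, HasDerivAt W ((ω ^ 2 - Q t) * (y t * Real.sin (ω * (t - a)))) t := by
    intro t ht
    have h1 := ((hyd t (hsub ht)).mul (hlin t).sin).sub (((hy t (hsub ht)).mul (hlin t).cos).const_mul ω)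
    refine h1.congr_deriv ?_
    ring
  have hmono : AntitoneOn W (Set.Icc a c) := by
    apply antitoneOn_of_deriv_nonpos (convex_Icc a c)
    · exact fun t ht => (hWd t ht).continuousAt.continuousWithinAt
    · intro t ht
      rw [interior_Icc] at ht
      exact (hWd t (Set.Ioo_subset_Icc_self ht)).differentiableAt.differentiableWithinAt
    · intro t ht
      rw [interior_Icc] at ht
      rw [(hWd t (Set.Ioo_subset_Icc_self ht)).deriv]
      have h1 := hQ t (hsub (Set.Ioo_subset_Icc_self ht))
      have h2 := hpos t ⟨ht.1, ht.2.trans hcb⟩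
      have h3 : 0 ≤ Real.sin (ω * (t - a)) := by
        apply Real.sin_nonneg_of_nonneg_of_le_pi
        · exact mul_nonneg hω.le (by linarith [ht.1])
        · nlinarith [ht.2]
      exact mul_nonpos_of_nonpos_of_nonneg (by linarith) (mul_nonneg h2.le h3)
  have h1 := hmono (Set.left_mem_Icc.2 hac.le) (Set.right_mem_Icc.2 hac.le) hac.le
  simp only [hW, ha, hωc, sub_self, mul_zero, Real.sin_zero, zero_mul, Real.sin_pi, Real.cos_pi] at h1
  nlinarith [hpos c ⟨hac, hcb⟩]

lemma energy_bound (y yd Q : ℝ → ℝ) (a b ω δ : ℝ) (hab : a ≤ b) (hω : 0 < ω)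
    (hy : ∀ t ∈ Set.Icc a b, HasDerivAt y (yd t) t)
    (hyd : ∀ t ∈ Set.Icc a b, HasDerivAt yd (-(Q t * y t)) t)
    (ha : y a = 0) (hb : y b = 0) (ha' : yd a ≠ 0) (hb' : yd b ≠ 0)
    (hQ : ∀ t ∈ Set.Icc a b, |Q t - ω ^ 2| ≤ δ) :
    |Real.log (yd b ^ 2) - Real.log (yd a ^ 2)| ≤ δ / ω * (b - a) := by
  set E : ℝ → ℝ := fun t => yd t ^ 2 + ω ^ 2 * y t ^ 2 with hE
  set κ := δ / ω with hκ
  have hEd : ∀ t ∈ Set.Icc a b, HasDerivAt E (2 * yd t * y t * (ω ^ 2 - Q t)) t := by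
    intro t ht
    have h1 := ((hyd t ht).pow 2).add (((hy t ht).pow 2).const_mul (ω ^ 2))
    refine h1.congr_deriv ?_
    norm_num
    ring
  have hEb : ∀ t ∈ Set.Icc a b, |2 * yd t * y t * (ω ^ 2 - Q t)| ≤ κ * E t := by
    intro t ht
    rw [abs_mul, abs_sub_comm]
    have h1 : |2 * yd t * y t| ≤ E t / ω := by
      rw [le_div_iff₀ hω]
      have h0 : |2 * yd t * y t| * ω = |2 * yd t * y t * ω| := by rw [abs_mul _ ω, abs_of_pos hω]
      rw [h0, abs_le]
      constructor <;> simp only [hE] <;> nlinarith [sq_nonneg (yd t + ω * y t), sq_nonneg (yd t - ω * y t)]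
    have h2 : 0 ≤ E t / ω := (abs_nonneg _).trans h1
    calc _ ≤ E t / ω * δ := mul_le_mul h1 (hQ t ht) (abs_nonneg _) h2
      _ = κ * E t := by rw [hκ]; ring
  have hexp : ∀ c t : ℝ, HasDerivAt (fun t => Real.exp (c * t)) (c * Real.exp (c * t)) t := by
    intro c t
    have := ((hasDerivAt_id t).const_mul c).exp
    simp only [id, mul_one] at this
    exact this.congr_deriv (by ring)
  have hFd : ∀ c, ∀ t ∈ Set.Icc a b, HasDerivAt (fun t => E t * Real.exp (c * t))
      ((2 * yd t * y t * (ω ^ 2 - Q t) + c * E t) * Real.exp (c * t)) t := by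
    intro c t ht
    exact ((hEd t ht).mul (hexp c t)).congr_deriv (by ring)
  have hm1 : MonotoneOn (fun t => E t * Real.exp (κ * t)) (Set.Icc a b) := by
    apply monotoneOn_of_deriv_nonneg (convex_Icc a b)
    · exact fun t ht => (hFd κ t ht).continuousAt.continuousWithinAt
    · intro t ht
      rw [interior_Icc] at ht
      exact (hFd κ t (Set.Ioo_subset_Icc_self ht)).differentiableAt.differentiableWithinAt
    · intro t ht
      rw [interior_Icc] at ht
      rw [(hFd κ t (Set.Ioo_subset_Icc_self ht)).deriv]
      have := abs_le.1 (hEb t (Set.Ioo_subset_Icc_self ht))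
      exact mul_nonneg (by linarith) (Real.exp_pos _).le
  have hm2 : AntitoneOn (fun t => E t * Real.exp (-κ * t)) (Set.Icc a b) := by
    apply antitoneOn_of_deriv_nonpos (convex_Icc a b)
    · exact fun t ht => (hFd (-κ) t ht).continuousAt.continuousWithinAt
    · intro t ht
      rw [interior_Icc] at ht
      exact (hFd (-κ) t (Set.Ioo_subset_Icc_self ht)).differentiableAt.differentiableWithinAt
    · intro t ht
      rw [interior_Icc] at ht
      rw [(hFd (-κ) t (Set.Ioo_subset_Icc_self ht)).deriv]
      have := abs_le.1 (hEb t (Set.Ioo_subset_Icc_self ht))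
      exact mul_nonpos_of_nonpos_of_nonneg (by linarith) (Real.exp_pos _).le
  have h1 := hm1 (Set.left_mem_Icc.2 hab) (Set.right_mem_Icc.2 hab) hab
  have h2 := hm2 (Set.left_mem_Icc.2 hab) (Set.right_mem_Icc.2 hab) hab
  have hA : 0 < yd a ^ 2 := by positivity
  have hB : 0 < yd b ^ 2 := by positivity
  simp only [hE, ha, hb] at h1 h2
  norm_num at h1 h2
  have l1 := Real.log_le_log (by positivity) h1
  have l2 := Real.log_le_log (by positivity) h2
  rw [Real.log_mul hA.ne' (Real.exp_pos _).ne', Real.log_mul hB.ne' (Real.exp_pos _).ne',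
    Real.log_exp, Real.log_exp] at l1 l2
  rw [abs_le]
  constructor <;> nlinarith

/-- the potential in normal form -/
noncomputable def potQ (n : ℕ) (t : ℝ) : ℝ := ((n:ℝ) + 1 / 2) ^ 2 + 1 / (4 * Real.sin t ^ 2)

structure NodeData (n : ℕ) (θ v : ℕ → ℝ) : Prop where
  pos : ∀ k, k < n → 0 < θ k ∧ θ k < Real.pi
  mono : ∀ k, k + 1 < n → θ k < θ (k + 1)
  vpos : ∀ k, k < n → 0 < v k
  lower : ∀ k, k + 1 < n → ∀ ω, 0 < ω → (∀ t ∈ Set.Icc (θ k) (θ (k + 1)), potQ n t ≤ ω ^ 2) →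
    Real.pi / ω ≤ θ (k + 1) - θ k
  upper : ∀ k, k + 1 < n → ∀ ω, 0 < ω → (∀ t ∈ Set.Icc (θ k) (θ (k + 1)), ω ^ 2 ≤ potQ n t) →
    θ (k + 1) - θ k ≤ Real.pi / ω
  energy : ∀ k, k + 1 < n → ∀ ω δ, 0 < ω →
    (∀ t ∈ Set.Icc (θ k) (θ (k + 1)), |potQ n t - ω ^ 2| ≤ δ) →
    |Real.log (v (k + 1)) - Real.log (v k)| ≤ δ / ω * (θ (k + 1) - θ k)
  symm : θ (n - 1) = Real.pi - θ 0
  total : ∑ k ∈ Finset.range n, v k * Real.sin (θ k) = 2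

section ode
open Polynomial

/-- normal form function -/
noncomputable def nfY (P : ℝ[X]) (t : ℝ) : ℝ := Real.sqrt (Real.sin t) * P.eval (Real.cos t)
/-- its derivative -/
noncomputable def nfYd (P : ℝ[X]) (t : ℝ) : ℝ :=
  Real.cos t / (2 * Real.sqrt (Real.sin t)) * P.eval (Real.cos t)
    - Real.sqrt (Real.sin t) * Real.sin t * (derivative P).eval (Real.cos t)

lemma hasDerivAt_nfY (P : ℝ[X]) (t : ℝ) (ht : 0 < Real.sin t) :
    HasDerivAt (nfY P) (nfYd P t) t := by
  have h1 := (Real.hasDerivAt_sin t).sqrt ht.ne'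
  have h2 := (P.hasDerivAt (Real.cos t)).comp t (Real.hasDerivAt_cos t)
  refine (h1.mul h2).congr_deriv ?_
  simp only [nfYd, Function.comp]
  ring

lemma hasDerivAt_nfYd (P : ℝ[X]) (n : ℕ)
    (hP : derivative ((1 - X ^ 2) * derivative P) + C ((n:ℝ) * (n + 1)) * P = 0)
    (t : ℝ) (ht : 0 < Real.sin t) :
    HasDerivAt (nfYd P) (-(potQ n t * nfY P t)) t := by
  have h0 := (Real.hasDerivAt_sin t)
  have h1 := h0.sqrt ht.ne'
  have hc := Real.hasDerivAt_cos t
  have h2 := (P.hasDerivAt (Real.cos t)).comp t hc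
  have h3 := ((derivative P).hasDerivAt (Real.cos t)).comp t hc
  have hs : 0 < Real.sqrt (Real.sin t) := Real.sqrt_pos.2 ht
  have h4 := (((hc.div (h1.const_mul 2) (by positivity)).mul h2)).sub ((h1.mul h0).mul h3)
  refine h4.congr_deriv ?_
  have he := congrArg (eval (Real.cos t)) hP
  simp only [derivative_mul, eval_add, eval_mul, eval_sub, derivative_sub, derivative_one, derivative_X_pow,
    eval_one, eval_pow, eval_X, eval_C, eval_zero, zero_sub, eval_neg] at he
  norm_num at he
  simp only [Function.comp, nfY, potQ, Pi.mul_apply, Pi.div_apply]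
  set p := P.eval (Real.cos t)
  set p' := (derivative P).eval (Real.cos t)
  set p'' := (derivative (derivative P)).eval (Real.cos t)
  set c := Real.cos t
  have hsc : c ^ 2 = 1 - Real.sin t ^ 2 := Real.cos_sq' t
  have hq : Real.sin t = Real.sqrt (Real.sin t) ^ 2 := (Real.sq_sqrt ht.le).symm
  set q := Real.sqrt (Real.sin t)
  rw [hq] at hsc ⊢
  have he' : q ^ 4 * p'' = 2 * c * p' - n * (n + 1) * p := by
    have : 1 - c ^ 2 = q ^ 4 := by rw [hsc]; ring
    rw [this] at he
    linarith
  field_simp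
  linear_combination 16 * q ^ 4 * he' - 4 * p * hsc

lemma cos_mem {n : ℕ} {x w : Fin n → ℝ} (h : IsGauss n x w) (hn : 1 ≤ n) (k : Fin n) :
    0 < 1 - x k ^ 2 ∧ (derivative (nodeP x)).eval (x k) ≠ 0 := by
  have h1 := h.weight hn k
  have h2 := polyInt_sq_pos (nodeP x) (nodeP_monic x).ne_zero
  have h3 : 0 < (2 * (n:ℝ) + 1) * polyInt (nodeP x * nodeP x) := by positivity
  rw [← h1] at h3
  have hx := h.hx k
  constructor
  · have h4 : 0 ≤ 1 - x k ^ 2 := by nlinarith [hx.1, hx.2]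
    refine lt_of_le_of_ne h4 ?_
    intro h5
    rw [← h5] at h3
    simp at h3
  · intro h5
    rw [h5] at h3
    simp at h3

lemma exists_nodeData {n : ℕ} {x w : Fin n → ℝ} (h : IsGauss n x w) (hn : 1 ≤ n) :
    ∃ θ v : ℕ → ℝ, NodeData n θ v ∧ ∀ F : ℝ → ℝ, ∑ k, w k * F (x k) =
      ∑ k ∈ Finset.range n, v k * Real.sin (θ k) * F (Real.cos (θ k)) := by
  classical
  set P := nodeP x with hP
  set K := (2 * (n:ℝ) + 1) * polyInt (P * P) with hK
  have hKpos : 0 < K := by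
    have h2 := polyInt_sq_pos (nodeP x) (nodeP_monic x).ne_zero
    positivity
  set σ := Tuple.sort (fun k => Real.arccos (x k)) with hσ
  have hmono : Monotone ((fun k => Real.arccos (x k)) ∘ σ) := Tuple.monotone_sort _
  have hx1 : ∀ k, -1 < x k ∧ x k < 1 := by
    intro k
    have := (cos_mem h hn k).1
    constructor <;> nlinarith
  have hcosacos : ∀ k, Real.cos (Real.arccos (x k)) = x k := fun k =>
    Real.cos_arccos (hx1 k).1.le (hx1 k).2.le
  set θ : ℕ → ℝ := fun k => if hk : k < n then Real.arccos (x (σ ⟨k, hk⟩)) else 0 with hθ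
  set v : ℕ → ℝ := fun k => K / (nfYd P (θ k)) ^ 2 with hv
  have hθk : ∀ k (hk : k < n), θ k = Real.arccos (x (σ ⟨k, hk⟩)) := fun k hk => by simp [hθ, hk]
  have hcosθ : ∀ k (hk : k < n), Real.cos (θ k) = x (σ ⟨k, hk⟩) := fun k hk => by
    rw [hθk k hk, hcosacos]
  have hpos : ∀ k, k < n → 0 < θ k ∧ θ k < Real.pi := by
    intro k hk
    rw [hθk k hk]
    exact ⟨Real.arccos_pos.2 (hx1 _).2, Real.arccos_lt_pi.2 (hx1 _).1⟩
  have hsin : ∀ k, k < n → 0 < Real.sin (θ k) := fun k hk =>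
    Real.sin_pos_of_pos_of_lt_pi (hpos k hk).1 (hpos k hk).2
  have hle : ∀ i j, i ≤ j → j < n → θ i ≤ θ j := by
    intro i j hij hj
    rw [hθk i (by omega), hθk j hj]
    exact hmono (show (⟨i, by omega⟩ : Fin n) ≤ ⟨j, hj⟩ from hij)
  have hlt : ∀ i j, i < j → j < n → θ i < θ j := by
    intro i j hij hj
    refine lt_of_le_of_ne (hle i j hij.le hj) ?_
    intro he
    have h1 := congrArg Real.cos he
    rw [hcosθ i (by omega), hcosθ j hj] at h1
    have h2 := σ.injective (h.inj hn h1)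
    simp at h2
    omega
  have hroot : ∀ t, 0 < t → t < Real.pi → P.eval (Real.cos t) = 0 → ∃ k, k < n ∧ t = θ k := by
    intro t h0 h1 ht
    obtain ⟨j, hj⟩ := nodeP_root x _ ht
    refine ⟨(σ.symm j : Fin n), (σ.symm j).2, ?_⟩
    rw [hθk _ (σ.symm j).2]
    simp only [Fin.eta, Equiv.apply_symm_apply]
    rw [← hj, Real.arccos_cos h0.le h1.le]
  have hYθ : ∀ k, k < n → nfY P (θ k) = 0 := by
    intro k hk
    rw [nfY, hcosθ k hk, hP, nodeP_eval, mul_zero]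
  have hYd : ∀ k (hk : k < n), nfYd P (θ k) ^ 2
      = Real.sin (θ k) ^ 3 * ((derivative P).eval (x (σ ⟨k, hk⟩))) ^ 2 := by
    intro k hk
    rw [nfYd, hcosθ k hk, hP, nodeP_eval, mul_zero, zero_sub, neg_sq, mul_pow, mul_pow,
      Real.sq_sqrt (hsin k hk).le]
    ring
  have hYd0 : ∀ k, k < n → nfYd P (θ k) ≠ 0 := by
    intro k hk h0
    have h1 := hYd k hk
    rw [h0] at h1
    have h2 := (cos_mem h hn (σ ⟨k, hk⟩)).2
    have h3 := hsin k hk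
    have : 0 < Real.sin (θ k) ^ 3 * ((derivative P).eval (x (σ ⟨k, hk⟩))) ^ 2 := by positivity
    rw [← h1] at this
    norm_num at this
  have hwv : ∀ k (hk : k < n), w (σ ⟨k, hk⟩) = v k * Real.sin (θ k) := by
    intro k hk
    have h1 := h.weight hn (σ ⟨k, hk⟩)
    have h2 := (cos_mem h hn (σ ⟨k, hk⟩)).2
    have h3 := hsin k hk
    have h4 : 1 - x (σ ⟨k, hk⟩) ^ 2 = Real.sin (θ k) ^ 2 := by
      rw [← hcosθ k hk, Real.sin_sq]
    rw [h4] at h1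
    rw [← hP] at h1 h2
    simp only [hv]
    rw [hYd k hk, hK, ← h1]
    field_simp
  have hsum : ∀ F : ℝ → ℝ, ∑ k, w k * F (x k) =
      ∑ k ∈ Finset.range n, v k * Real.sin (θ k) * F (Real.cos (θ k)) := by
    intro F
    rw [Finset.sum_range, ← Equiv.sum_comp σ]
    apply Finset.sum_congr rfl
    intro k _
    rw [← hwv k k.2, hcosθ k k.2]
  have hsinI : ∀ k, k + 1 < n → ∀ t ∈ Set.Icc (θ k) (θ (k + 1)), 0 < Real.sin t := by
    intro k hk t ht
    exact Real.sin_pos_of_pos_of_lt_pi ((hpos k (by omega)).1.trans_le ht.1)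
      (ht.2.trans_lt (hpos (k+1) hk).2)
  have hode := h.ode hn
  have hne : ∀ k, k + 1 < n → ∀ t ∈ Set.Ioo (θ k) (θ (k + 1)), nfY P t ≠ 0 := by
    intro k hk t ht h0
    have hs := hsinI k hk t (Set.Ioo_subset_Icc_self ht)
    rw [nfY, mul_eq_zero] at h0
    rcases h0 with h0 | h0
    · exact (Real.sqrt_pos.2 hs).ne' h0
    · obtain ⟨j, hj, rfl⟩ := hroot t ((hpos k (by omega)).1.trans ht.1) (ht.2.trans (hpos (k+1) hk).2) h0
      have h1 : k < j := by
        by_contra! hc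
        exact absurd ht.1 (not_lt.2 (hle j k hc (by omega)))
      have h2 : j < k + 1 := by
        by_contra! hc
        exact absurd ht.2 (not_lt.2 (hle (k+1) j hc hj))
      omega
  have hsgn : ∀ k, k + 1 < n → ∃ R : ℝ[X], (R = P ∨ R = -P) ∧
      ∀ t ∈ Set.Ioo (θ k) (θ (k + 1)), 0 < nfY R t := by
    intro k hk
    have hcont : ContinuousOn (nfY P) (Set.Ioo (θ k) (θ (k + 1))) := fun t ht =>
      (hasDerivAt_nfY P t (hsinI k hk t (Set.Ioo_subset_Icc_self ht))).continuousAt.continuousWithinAt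
    have hneg : ∀ t, nfY (-P) t = - nfY P t := by intro t; simp [nfY]
    by_cases hc : ∀ t ∈ Set.Ioo (θ k) (θ (k + 1)), 0 < nfY P t
    · exact ⟨P, Or.inl rfl, hc⟩
    · refine ⟨-P, Or.inr rfl, ?_⟩
      push Not at hc
      obtain ⟨t0, ht0, hc⟩ := hc
      intro t ht
      rw [hneg]
      by_contra! hlt'
      have h0 : (0:ℝ) ∈ nfY P '' Set.Ioo (θ k) (θ (k + 1)) :=
        isPreconnected_Ioo.intermediate_value ht0 ht hcont ⟨hc, by linarith⟩
      obtain ⟨s, hs, hs0⟩ := h0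
      exact hne k hk s hs hs0
  have hodeR : ∀ R : ℝ[X], (R = P ∨ R = -P) →
      derivative ((1 - X ^ 2) * derivative R) + C ((n:ℝ) * (n + 1)) * R = 0 := by
    rintro R (rfl | rfl)
    · exact hode
    · rw [← neg_eq_zero, ← hode]
      simp only [derivative_neg, mul_neg]
      ring
  refine ⟨θ, v, ⟨hpos, fun k hk => hlt k (k+1) (by omega) hk, ?_, ?_, ?_, ?_, ?_, ?_⟩, hsum⟩
  · intro k hk
    have := hYd0 k hk
    simp only [hv]
    positivity
  · intro k hk ω hω hQ
    obtain ⟨R, hR, hRpos⟩ := hsgn k hk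
    have hYR : ∀ j, j < n → nfY R (θ j) = 0 := by
      intro j hj
      rcases hR with rfl | rfl
      · exact hYθ j hj
      · simpa [nfY] using hYθ j hj
    have hYdR : nfYd R (θ (k+1)) ≠ 0 := by
      rcases hR with rfl | rfl
      · exact hYd0 (k+1) hk
      · have : nfYd (-P) (θ (k+1)) = - nfYd P (θ (k+1)) := by simp [nfYd]; ring
        rw [this]; exact neg_ne_zero.2 (hYd0 (k+1) hk)
    exact sturm_lower (nfY R) (nfYd R) (potQ n) _ _ ω (hlt k (k+1) (by omega) hk) hω
      (fun t ht => hasDerivAt_nfY R t (hsinI k hk t ht))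
      (fun t ht => hasDerivAt_nfYd R n (hodeR R hR) t (hsinI k hk t ht))
      (hYR k (by omega)) (hYR (k+1) hk) hRpos hYdR hQ
  · intro k hk ω hω hQ
    obtain ⟨R, hR, hRpos⟩ := hsgn k hk
    have hYR : ∀ j, j < n → nfY R (θ j) = 0 := by
      intro j hj
      rcases hR with rfl | rfl
      · exact hYθ j hj
      · simpa [nfY] using hYθ j hj
    exact sturm_upper (nfY R) (nfYd R) (potQ n) _ _ ω hω
      (fun t ht => hasDerivAt_nfY R t (hsinI k hk t ht))
      (fun t ht => hasDerivAt_nfYd R n (hodeR R hR) t (hsinI k hk t ht))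
      (hYR k (by omega)) hRpos hQ
  · intro k hk ω δ hω hQ
    have h1 := energy_bound (nfY P) (nfYd P) (potQ n) _ _ ω δ (hlt k (k+1) (by omega) hk).le hω
      (fun t ht => hasDerivAt_nfY P t (hsinI k hk t ht))
      (fun t ht => hasDerivAt_nfYd P n hode t (hsinI k hk t ht))
      (hYθ k (by omega)) (hYθ (k+1) hk) (hYd0 k (by omega)) (hYd0 (k+1) hk) hQ
    have a1 := hYd0 k (by omega)
    have a2 := hYd0 (k+1) hk
    simp only [hv]
    rw [Real.log_div hKpos.ne' (by positivity), Real.log_div hKpos.ne' (by positivity)]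
    rw [abs_sub_comm] at h1
    convert h1 using 2
    ring
  · have hsy : ∀ k, k < n → ∃ j, j < n ∧ Real.pi - θ k = θ j := by
      intro k hk
      have h0 := hpos k hk
      apply hroot _ (by linarith) (by linarith)
      rw [Real.cos_pi_sub, hcosθ k hk]
      obtain ⟨j, hj⟩ := h.symm hn (σ ⟨k, hk⟩)
      rw [← hj]
      exact nodeP_eval x j
    obtain ⟨j, hj, hj'⟩ := hsy 0 (by omega)
    obtain ⟨i, hi, hi'⟩ := hsy (n-1) (by omega)
    have h1 := hle j (n-1) (by omega) (by omega)
    have h2 := hle 0 i (by omega) hi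
    linarith
  · have := hsum (fun _ => 1)
    simp only [mul_one] at this
    rw [← this]
    have h1 := h.ex 1 (by simp)
    simp [polyInt_apply] at h1
    rw [h1]; norm_num
end ode

lemma jordan_min (t : ℝ) (h0 : 0 ≤ t) (h1 : t ≤ Real.pi) (a : ℝ) (ha : a ≤ t) (hb : a ≤ Real.pi - t) :
    2 / Real.pi * a ≤ Real.sin t := by
  have hp : 0 < 2 / Real.pi := by positivity
  rcases le_total t (Real.pi / 2) with h | h
  · exact (mul_le_mul_of_nonneg_left ha hp.le).trans (Real.mul_le_sin h0 h)
  · rw [← Real.sin_pi_sub]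
    exact (mul_le_mul_of_nonneg_left hb hp.le).trans (Real.mul_le_sin (by linarith) (by linarith))

lemma sum_inv_sq_le (N : ℕ) : ∑ k ∈ Finset.range N, 1 / ((k:ℝ) + 1) ^ 2 ≤ 2 := by
  have : ∀ N : ℕ, ∑ k ∈ Finset.range (N + 1), 1 / ((k:ℝ) + 1) ^ 2 ≤ 2 - 1 / ((N:ℝ) + 1) := by
    intro N
    induction N with
    | zero => norm_num
    | succ N ih =>
      rw [Finset.sum_range_succ]
      have : 1 / (((N + 1 : ℕ) : ℝ) + 1) ^ 2 ≤ 1 / ((N:ℝ) + 1) - 1 / (((N + 1 : ℕ):ℝ) + 1) := by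
        push_cast
        rw [div_sub_div _ _ (by positivity) (by positivity), div_le_div_iff₀ (by positivity) (by positivity)]
        nlinarith [(Nat.cast_nonneg N : (0:ℝ) ≤ N)]
      linarith
  rcases N with _ | N
  · simp
  · have h := this N
    have : 0 ≤ 1 / ((N:ℝ) + 1) := by positivity
    linarith

/-- distance of gap `k` to the ends -/
noncomputable def gapE (n k : ℕ) : ℝ := min ((k:ℝ) + 1) ((n:ℝ) - 1 - k)

lemma gapE_ge_one {n k : ℕ} (hk : k + 1 < n) : 1 ≤ gapE n k := by
  have : (k:ℝ) + 2 ≤ n := by exact_mod_cast hk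
  rw [gapE, le_min_iff]
  constructor <;> linarith [(Nat.cast_nonneg k : (0:ℝ) ≤ k)]

lemma sum_gapE (n : ℕ) : ∑ k ∈ Finset.range (n - 1), 1 / gapE n k ^ 2 ≤ 4 := by
  have h1 : ∀ k ∈ Finset.range (n - 1), 1 / gapE n k ^ 2 ≤
      1 / ((k:ℝ) + 1) ^ 2 + 1 / (((n - 1 - 1 - k : ℕ) : ℝ) + 1) ^ 2 := by
    intro k hk
    have hk' : k + 1 < n := by have := Finset.mem_range.1 hk; omega
    have : (((n - 1 - 1 - k : ℕ) : ℝ) + 1) = (n:ℝ) - 1 - k := by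
      rw [Nat.cast_sub (by omega), Nat.cast_sub (by omega), Nat.cast_sub (by omega)]; push_cast; ring
    rw [this]
    have h2 : 0 ≤ 1 / ((k:ℝ) + 1) ^ 2 := by positivity
    have h3 : 0 ≤ 1 / ((n:ℝ) - 1 - k) ^ 2 := by positivity
    rw [gapE]
    rcases min_choice ((k:ℝ) + 1) ((n:ℝ) - 1 - k) with h | h <;> rw [h] <;> linarith
  refine (Finset.sum_le_sum h1).trans ?_
  rw [Finset.sum_add_distrib, Finset.sum_range_reflect (fun k => 1 / ((k:ℝ) + 1) ^ 2) (n - 1)]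
  linarith [sum_inv_sq_le (n - 1)]

lemma inv_diff (L a b : ℝ) (hL : 0 < L) (ha : L ≤ a) (hb : L ≤ b) :
    |Real.pi / a - Real.pi / b| ≤ Real.pi * |a ^ 2 - b ^ 2| / (2 * L ^ 3) := by
  have ha0 : 0 < a := hL.trans_le ha
  have hb0 : 0 < b := hL.trans_le hb
  have h1 : Real.pi / a - Real.pi / b = Real.pi * (b ^ 2 - a ^ 2) / (a * b * (a + b)) := by
    field_simp; ring
  rw [h1, abs_div, abs_mul, abs_of_pos Real.pi_pos, abs_sub_comm (b ^ 2), abs_of_pos (by positivity : 0 < a * b * (a + b))]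
  apply div_le_div_of_nonneg_left (by positivity) (by positivity)
  have : L * L ≤ a * b := mul_le_mul ha hb hL.le ha0.le
  calc 2 * L ^ 3 = (L * L) * (L + L) := by ring
    _ ≤ (a * b) * (a + b) := mul_le_mul this (by linarith) (by linarith) (by positivity)

lemma inv_sin_sq_diff (s a b : ℝ) (hs : 0 < s) (ha : s ≤ a) (hb : s ≤ b) :
    |1 / (4 * a ^ 2) - 1 / (4 * b ^ 2)| ≤ |a - b| / (2 * s ^ 3) := by
  have ha0 : 0 < a := hs.trans_le ha
  have hb0 : 0 < b := hs.trans_le hb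
  have h1 : 1 / (4 * a ^ 2) - 1 / (4 * b ^ 2) = (b - a) * (1 / (a * b ^ 2) + 1 / (a ^ 2 * b)) / 4 := by
    field_simp; ring
  rw [h1, abs_div, abs_mul, abs_sub_comm b a, abs_of_pos (by positivity : 0 < 1 / (a * b ^ 2) + 1 / (a ^ 2 * b)),
    abs_of_pos (by norm_num : (0:ℝ) < 4)]
  have h2 : 1 / (a * b ^ 2) ≤ 1 / s ^ 3 := by
    apply div_le_div_of_nonneg_left (by norm_num) (by positivity)
    calc s ^ 3 = s * s ^ 2 := by ring
      _ ≤ a * b ^ 2 := by gcongr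
  have h3 : 1 / (a ^ 2 * b) ≤ 1 / s ^ 3 := by
    apply div_le_div_of_nonneg_left (by norm_num) (by positivity)
    calc s ^ 3 = s ^ 2 * s := by ring
      _ ≤ a ^ 2 * b := by gcongr
  calc |a - b| * (1 / (a * b ^ 2) + 1 / (a ^ 2 * b)) / 4 ≤ |a - b| * (1 / s ^ 3 + 1 / s ^ 3) / 4 := by gcongr
    _ = _ := by field_simp; ring

lemma sin_lip (a b : ℝ) : |Real.sin a - Real.sin b| ≤ |a - b| := by
  have := Real.lipschitzWith_sin.dist_le_mul a b
  simpa [Real.dist_eq] using this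

namespace NodeData
variable {n : ℕ} {θ v : ℕ → ℝ}

lemma up (h : NodeData n θ v) (k : ℕ) (hk : k + 1 < n) :
    θ (k + 1) - θ k ≤ Real.pi / ((n:ℝ) + 1 / 2) := by
  apply h.upper k hk _ (by positivity)
  intro t _
  rw [potQ]
  have : 0 ≤ 1 / (4 * Real.sin t ^ 2) := by positivity
  linarith

lemma upsum (h : NodeData n θ v) (k j : ℕ) (hk : k + j < n) :
    θ (k + j) ≤ θ k + j * (Real.pi / ((n:ℝ) + 1 / 2)) := by
  induction j with
  | zero => simp
  | succ j ih =>
    have h1 := ih (by omega)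
    have h2 := h.up (k + j) (by omega)
    push_cast
    rw [← add_assoc]
    linarith

lemma theta0 (h : NodeData n θ v) (hn : 1 ≤ n) : 3 / 4 * Real.pi / ((n:ℝ) + 1 / 2) ≤ θ 0 := by
  have h1 := h.upsum 0 (n - 1) (by omega)
  rw [zero_add, h.symm, Nat.cast_sub hn] at h1
  have hL : (0:ℝ) < (n:ℝ) + 1 / 2 := by positivity
  push_cast at h1
  have : Real.pi = ((n:ℝ) + 1 / 2) * (Real.pi / ((n:ℝ) + 1 / 2)) := by field_simp
  have h3 : 3 / 4 * Real.pi / ((n:ℝ) + 1 / 2) = 3 / 4 * (Real.pi / ((n:ℝ) + 1 / 2)) := by ring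
  rw [h3]
  set z := Real.pi / ((n:ℝ) + 1 / 2)
  rw [this] at h1
  linarith

lemma le_of_le (h : NodeData n θ v) (k j : ℕ) (hk : k + j < n) : θ k ≤ θ (k + j) := by
  induction j with
  | zero => simp
  | succ j ih => exact (ih (by omega)).trans (h.mono (k + j) (by omega)).le

lemma low (h : NodeData n θ v) (k : ℕ) (hk : k + 1 < n) :
    2 / ((n:ℝ) + 1 / 2) ≤ θ (k + 1) - θ k := by
  have hL : (0:ℝ) < (n:ℝ) + 1 / 2 := by positivity
  have h0 := h.theta0 (by omega)
  set L := (n:ℝ) + 1 / 2 with hLd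
  have h1 : Real.pi / (11 / 10 * L) ≤ θ (k + 1) - θ k := by
    apply h.lower k hk _ (by positivity)
    intro t ht
    have ht0 : θ 0 ≤ t := by
      have := h.le_of_le 0 k (by omega)
      rw [zero_add] at this
      exact this.trans ht.1
    have ht1 : t ≤ Real.pi - θ 0 := by
      have := h.le_of_le (k+1) (n - 1 - (k+1)) (by omega)
      rw [show k + 1 + (n - 1 - (k+1)) = n - 1 by omega, h.symm] at this
      exact ht.2.trans this
    have hp0 := (h.pos 0 (by omega)).1
    have hs := jordan_min t (by linarith) (by linarith) (3 / 4 * Real.pi / L) (by linarith) (by linarith)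
    have hs' : 3 / 2 / L ≤ Real.sin t := by
      have : 2 / Real.pi * (3 / 4 * Real.pi / L) = 3 / 2 / L := by
        field_simp; norm_num
      linarith
    rw [potQ, ← hLd]
    have : 1 / (4 * Real.sin t ^ 2) ≤ 1 / (4 * (3 / 2 / L) ^ 2) := by
      apply div_le_div_of_nonneg_left (by norm_num) (by positivity)
      gcongr
    have h2 : 1 / (4 * (3 / 2 / L) ^ 2) = L ^ 2 / 9 := by field_simp; norm_num
    nlinarith [sq_nonneg L]
  refine le_trans ?_ h1
  rw [div_le_div_iff₀ hL (by positivity)]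
  nlinarith [Real.pi_gt_three]

lemma lowsum (h : NodeData n θ v) (k j : ℕ) (hk : k + j < n) :
    θ k + j * (2 / ((n:ℝ) + 1 / 2)) ≤ θ (k + j) := by
  induction j with
  | zero => simp
  | succ j ih =>
    have h1 := ih (by omega)
    have h2 := h.low (k + j) (by omega)
    push_cast
    rw [← add_assoc]
    linarith

lemma theta_ge (h : NodeData n θ v) (k : ℕ) (hk : k < n) :
    2 * ((k:ℝ) + 1) / ((n:ℝ) + 1 / 2) ≤ θ k := by
  have h1 := h.lowsum 0 k (by omega)
  have h0 := h.theta0 (by omega)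
  rw [zero_add] at h1
  have hL : (0:ℝ) < (n:ℝ) + 1 / 2 := by positivity
  have : 2 / ((n:ℝ) + 1 / 2) ≤ 3 / 4 * Real.pi / ((n:ℝ) + 1 / 2) := by
    gcongr; linarith [Real.pi_gt_three]
  have h3 : 2 * ((k:ℝ) + 1) / ((n:ℝ) + 1 / 2) = k * (2 / ((n:ℝ) + 1 / 2)) + 2 / ((n:ℝ) + 1 / 2) := by ring
  linarith

lemma theta_le (h : NodeData n θ v) (k : ℕ) (hk : k < n) :
    2 * ((n:ℝ) - k) / ((n:ℝ) + 1 / 2) ≤ Real.pi - θ k := by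
  have h1 := h.lowsum k (n - 1 - k) (by omega)
  have h0 := h.theta0 (by omega)
  rw [show k + (n - 1 - k) = n - 1 by omega, h.symm, Nat.cast_sub (by omega), Nat.cast_sub (by omega)] at h1
  push_cast at h1
  have : 2 / ((n:ℝ) + 1 / 2) ≤ 3 / 4 * Real.pi / ((n:ℝ) + 1 / 2) := by
    gcongr; linarith [Real.pi_gt_three]
  have h3 : 2 * ((n:ℝ) - k) / ((n:ℝ) + 1 / 2) = (n - 1 - k) * (2 / ((n:ℝ) + 1 / 2)) + 2 / ((n:ℝ) + 1 / 2) := by ring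
  linarith

lemma sin_ge (h : NodeData n θ v) (k : ℕ) (hk : k + 1 < n) (t : ℝ) (ht : t ∈ Set.Icc (θ k) (θ (k + 1))) :
    gapE n k / ((n:ℝ) + 1 / 2) ≤ Real.sin t := by
  have h1 := h.theta_ge k (by omega)
  have h2 := h.theta_le (k+1) hk
  have hL : (0:ℝ) < (n:ℝ) + 1 / 2 := by positivity
  have he := gapE_ge_one hk
  have hp := Real.pi_pos
  push_cast at h2
  have a1 : gapE n k ≤ (k:ℝ) + 1 := min_le_left _ _
  have a2 : gapE n k ≤ (n:ℝ) - 1 - k := min_le_right _ _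
  have hs := jordan_min t ((h.pos k (by omega)).1.le.trans ht.1) (ht.2.trans (h.pos (k+1) hk).2.le)
    (2 * gapE n k / ((n:ℝ) + 1 / 2))
    (le_trans (by gcongr) (h1.trans ht.1))
    (le_trans (by gcongr; linarith) (h2.trans (by linarith [ht.2])))
  refine le_trans ?_ hs
  have : 2 / Real.pi * (2 * gapE n k / ((n:ℝ) + 1 / 2)) = (4 / Real.pi) * (gapE n k / ((n:ℝ) + 1 / 2)) := by ring
  rw [this]
  have h4 : 1 ≤ 4 / Real.pi := by rw [le_div_iff₀ hp]; linarith [Real.pi_le_four]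
  have h5 : 0 ≤ gapE n k / ((n:ℝ) + 1 / 2) := by positivity
  nlinarith

lemma pot_ge (n : ℕ) (t : ℝ) : ((n:ℝ) + 1 / 2) ^ 2 ≤ potQ n t := by
  rw [potQ]
  have : 0 ≤ 1 / (4 * Real.sin t ^ 2) := by positivity
  linarith

lemma pot_diff (h : NodeData n θ v) (k : ℕ) (hk : k + 1 < n) (t s : ℝ)
    (ht : t ∈ Set.Icc (θ k) (θ (k + 1))) (hs : s ∈ Set.Icc (θ k) (θ (k + 1))) :
    |potQ n t - potQ n s| ≤ 2 * ((n:ℝ) + 1 / 2) ^ 2 / gapE n k ^ 3 := by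
  have hL : (0:ℝ) < (n:ℝ) + 1 / 2 := by positivity
  have he := gapE_ge_one hk
  have h1 := inv_sin_sq_diff (gapE n k / ((n:ℝ) + 1 / 2)) _ _ (by positivity) (h.sin_ge k hk t ht) (h.sin_ge k hk s hs)
  have h2 : |Real.sin t - Real.sin s| ≤ Real.pi / ((n:ℝ) + 1 / 2) := by
    refine (sin_lip t s).trans (le_trans ?_ (h.up k hk))
    rw [abs_le]; constructor <;> linarith [ht.1, ht.2, hs.1, hs.2]
  have h3 : potQ n t - potQ n s = 1 / (4 * Real.sin t ^ 2) - 1 / (4 * Real.sin s ^ 2) := by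
    rw [potQ, potQ]; ring
  rw [h3]
  refine h1.trans ?_
  calc _ ≤ Real.pi / ((n:ℝ) + 1 / 2) / (2 * (gapE n k / ((n:ℝ) + 1 / 2)) ^ 3) := by gcongr
    _ ≤ 4 / ((n:ℝ) + 1 / 2) / (2 * (gapE n k / ((n:ℝ) + 1 / 2)) ^ 3) := by gcongr; exact Real.pi_le_four
    _ = _ := by field_simp; norm_num

lemma spacing (h : NodeData n θ v) (k : ℕ) (hk : k + 1 < n) (s : ℝ)
    (hs : s ∈ Set.Icc (θ k) (θ (k + 1))) :
    |θ (k + 1) - θ k - Real.pi / Real.sqrt (potQ n s)| ≤ 4 / ((n:ℝ) + 1 / 2) / gapE n k ^ 3 := by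
  have hL : (0:ℝ) < (n:ℝ) + 1 / 2 := by positivity
  have he := gapE_ge_one hk
  set L := (n:ℝ) + 1 / 2 with hLd
  set δ := 2 * L ^ 2 / gapE n k ^ 3 with hδ
  have hδ0 : 0 ≤ δ := by positivity
  have hQs := pot_ge n s
  rw [← hLd] at hQs
  have hQs0 : 0 ≤ potQ n s := (sq_nonneg L).trans hQs
  have hb : ∀ ω, L ≤ ω → |ω ^ 2 - potQ n s| ≤ δ →
      |Real.pi / ω - Real.pi / Real.sqrt (potQ n s)| ≤ 4 / L / gapE n k ^ 3 := by
    intro ω h1 h2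
    refine (inv_diff L ω _ hL h1 (Real.le_sqrt_of_sq_le hQs)).trans ?_
    rw [Real.sq_sqrt hQs0]
    calc _ ≤ 4 * δ / (2 * L ^ 3) := by gcongr; exact Real.pi_le_four
      _ = _ := by rw [hδ]; field_simp
  have hpd : ∀ t ∈ Set.Icc (θ k) (θ (k + 1)), |potQ n t - potQ n s| ≤ δ := fun t ht => h.pot_diff k hk t s ht hs
  have l1 := h.lower k hk (Real.sqrt (potQ n s + δ)) (Real.sqrt_pos.2 (by nlinarith [sq_pos_of_pos hL])) (by
    intro t ht
    rw [Real.sq_sqrt (by linarith)]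
    have := (abs_le.1 (hpd t ht)).2
    linarith)
  have l2 := h.upper k hk (Real.sqrt (max (L ^ 2) (potQ n s - δ))) (Real.sqrt_pos.2 (lt_max_of_lt_left (by positivity))) (by
    intro t ht
    rw [Real.sq_sqrt (le_max_of_le_left (by positivity))]
    have := (abs_le.1 (hpd t ht)).1
    exact max_le (pot_ge n t) (by linarith))
  have b1 := abs_le.1 (hb (Real.sqrt (potQ n s + δ)) (Real.le_sqrt_of_sq_le (by linarith)) (by
    rw [Real.sq_sqrt (by linarith)]; simp [abs_of_nonneg hδ0]))
  have b2 := abs_le.1 (hb (Real.sqrt (max (L ^ 2) (potQ n s - δ))) (Real.le_sqrt_of_sq_le (le_max_left _ _)) (by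
    rw [Real.sq_sqrt (le_max_of_le_left (by positivity)), abs_le]
    constructor
    · linarith [le_max_right (L ^ 2) (potQ n s - δ)]
    · have : max (L ^ 2) (potQ n s - δ) ≤ potQ n s := max_le hQs (by linarith)
      linarith))
  rw [abs_le]
  constructor <;> linarith [b1.1, b1.2, b2.1, b2.2]

/-- gap defect -/
noncomputable def eta (n : ℕ) (θ : ℕ → ℝ) (k : ℕ) : ℝ := Real.pi / ((n:ℝ) + 1 / 2) - (θ (k + 1) - θ k)

lemma eta_nonneg (h : NodeData n θ v) (k : ℕ) (hk : k + 1 < n) : 0 ≤ eta n θ k := by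
  rw [eta]; linarith [h.up k hk]

lemma eta_le' (h : NodeData n θ v) (k : ℕ) (hk : k + 1 < n) :
    eta n θ k ≤ Real.pi / 8 / ((n:ℝ) + 1 / 2) / gapE n k ^ 2 := by
  have hL : (0:ℝ) < (n:ℝ) + 1 / 2 := by positivity
  have he := gapE_ge_one hk
  rw [eta]
  set L := (n:ℝ) + 1 / 2 with hLd
  set M := L ^ 2 + L ^ 2 / (4 * gapE n k ^ 2) with hM
  have hM0 : 0 < M := by positivity
  have hLM : L ≤ Real.sqrt M := Real.le_sqrt_of_sq_le (by
    have : 0 ≤ L ^ 2 / (4 * gapE n k ^ 2) := by positivity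
    linarith)
  have l1 := h.lower k hk (Real.sqrt M) (Real.sqrt_pos.2 hM0) (by
    intro t ht
    rw [Real.sq_sqrt hM0.le, potQ, hM, ← hLd]
    have h1 := h.sin_ge k hk t ht
    have : 1 / (4 * Real.sin t ^ 2) ≤ 1 / (4 * (gapE n k / L) ^ 2) := by
      apply div_le_div_of_nonneg_left (by norm_num) (by positivity)
      gcongr
    have h2 : 1 / (4 * (gapE n k / L) ^ 2) = L ^ 2 / (4 * gapE n k ^ 2) := by field_simp
    linarith)
  have b := inv_diff L L (Real.sqrt M) hL le_rfl hLM
  rw [Real.sq_sqrt hM0.le] at b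
  have h3 : Real.pi * |L ^ 2 - M| / (2 * L ^ 3) = Real.pi / 8 / L / gapE n k ^ 2 := by
    rw [hM, sub_add_cancel_left, abs_neg, abs_of_nonneg (by positivity)]
    field_simp; norm_num
  rw [h3] at b
  have := (abs_le.1 b).2
  linarith

lemma eta_le (h : NodeData n θ v) (k : ℕ) (hk : k + 1 < n) :
    eta n θ k ≤ 1 / ((n:ℝ) + 1 / 2) / gapE n k ^ 2 := by
  have he := gapE_ge_one hk
  refine (h.eta_le' k hk).trans ?_
  gcongr
  linarith [Real.pi_le_four]

lemma eta_diff (h : NodeData n θ v) (k : ℕ) (hk : k + 2 < n) :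
    |eta n θ (k + 1) - eta n θ k| ≤ 4 / ((n:ℝ) + 1 / 2) * (1 / gapE n k ^ 3 + 1 / gapE n (k + 1) ^ 3) := by
  have h1 := abs_le.1 (h.spacing k (by omega) (θ (k+1)) ⟨(h.mono k (by omega)).le, le_rfl⟩)
  have h2 := abs_le.1 (h.spacing (k+1) (by omega) (θ (k+1)) ⟨le_rfl, (h.mono (k+1) (by omega)).le⟩)
  rw [eta, eta, abs_le]
  have : 4 / ((n:ℝ) + 1 / 2) * (1 / gapE n k ^ 3 + 1 / gapE n (k + 1) ^ 3) =
    4 / ((n:ℝ) + 1 / 2) / gapE n k ^ 3 + 4 / ((n:ℝ) + 1 / 2) / gapE n (k + 1) ^ 3 := by ring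
  rw [this]
  constructor <;> linarith [h1.1, h1.2, h2.1, h2.2]

lemma theta0_le (h : NodeData n θ v) (hn : 1 ≤ n) : θ 0 ≤ Real.pi / ((n:ℝ) + 1 / 2) := by
  have hL : (0:ℝ) < (n:ℝ) + 1 / 2 := by positivity
  have h1 : ∑ k ∈ Finset.range (n - 1), eta n θ k ≤ Real.pi / 8 / ((n:ℝ) + 1 / 2) * 4 := by
    calc _ ≤ ∑ k ∈ Finset.range (n - 1), Real.pi / 8 / ((n:ℝ) + 1 / 2) * (1 / gapE n k ^ 2) := by
          apply Finset.sum_le_sum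
          intro k hk
          refine (h.eta_le' k (by have := Finset.mem_range.1 hk; omega)).trans (le_of_eq ?_)
          ring
      _ = Real.pi / 8 / ((n:ℝ) + 1 / 2) * ∑ k ∈ Finset.range (n - 1), (1 / gapE n k ^ 2) := by rw [Finset.mul_sum]
      _ ≤ _ := by
        apply mul_le_mul_of_nonneg_left (sum_gapE n)
        have := Real.pi_pos
        positivity
  have h2 : ∑ k ∈ Finset.range (n - 1), eta n θ k =
      (n - 1) * (Real.pi / ((n:ℝ) + 1 / 2)) - (Real.pi - 2 * θ 0) := by
    simp only [eta]
    rw [Finset.sum_sub_distrib, Finset.sum_range_sub, h.symm]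
    simp [Nat.cast_sub hn]
    ring
  rw [h2] at h1
  have : Real.pi = ((n:ℝ) + 1 / 2) * (Real.pi / ((n:ℝ) + 1 / 2)) := by field_simp
  have h3 : Real.pi / 8 / ((n:ℝ) + 1 / 2) * 4 = 1 / 2 * (Real.pi / ((n:ℝ) + 1 / 2)) := by ring
  rw [h3] at h1
  set z := Real.pi / ((n:ℝ) + 1 / 2)
  rw [this] at h1
  linarith

lemma sin_le (h : NodeData n θ v) (k : ℕ) (hk : k < n) :
    Real.sin (θ k) ≤ 4 * ((k:ℝ) + 1) / ((n:ℝ) + 1 / 2) := by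
  have h0 := h.theta0_le (by omega)
  have h1 := h.upsum 0 k (by omega)
  rw [zero_add] at h1
  have h2 := Real.sin_le (h.pos k hk).1.le
  calc _ ≤ ((k:ℝ) + 1) * (Real.pi / ((n:ℝ) + 1 / 2)) := by linarith
    _ ≤ ((k:ℝ) + 1) * (4 / ((n:ℝ) + 1 / 2)) := by gcongr; exact Real.pi_le_four
    _ = _ := by ring

lemma sin_le' (h : NodeData n θ v) (k : ℕ) (hk : k < n) :
    Real.sin (θ k) ≤ 4 * ((n:ℝ) - k) / ((n:ℝ) + 1 / 2) := by
  have h0 := h.theta0_le (by omega)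
  have h1 := h.upsum k (n - 1 - k) (by omega)
  rw [show k + (n - 1 - k) = n - 1 by omega, h.symm, Nat.cast_sub (by omega), Nat.cast_sub (by omega)] at h1
  push_cast at h1
  have hk' : (k:ℝ) ≤ n := by exact_mod_cast hk.le
  have h2 := Real.sin_le (show 0 ≤ Real.pi - θ k by linarith [(h.pos k hk).2])
  rw [Real.sin_pi_sub] at h2
  calc _ ≤ ((n:ℝ) - k) * (Real.pi / ((n:ℝ) + 1 / 2)) := by linarith
    _ ≤ ((n:ℝ) - k) * (4 / ((n:ℝ) + 1 / 2)) := by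
      apply mul_le_mul_of_nonneg_left _ (by linarith)
      gcongr
      exact Real.pi_le_four
    _ = _ := by ring

lemma log_diff (h : NodeData n θ v) (k : ℕ) (hk : k + 1 < n) :
    |Real.log (v (k + 1)) - Real.log (v k)| ≤ 8 / gapE n k ^ 3 := by
  have hL : (0:ℝ) < (n:ℝ) + 1 / 2 := by positivity
  have he := gapE_ge_one hk
  have hm : θ k ∈ Set.Icc (θ k) (θ (k + 1)) := ⟨le_rfl, (h.mono k hk).le⟩
  have hQ := pot_ge n (θ k)
  have hLQ : (n:ℝ) + 1 / 2 ≤ Real.sqrt (potQ n (θ k)) := Real.le_sqrt_of_sq_le hQ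
  refine (h.energy k hk (Real.sqrt (potQ n (θ k))) (2 * ((n:ℝ) + 1 / 2) ^ 2 / gapE n k ^ 3)
    (hL.trans_le hLQ) ?_).trans ?_
  · intro t ht
    rw [Real.sq_sqrt ((sq_nonneg _).trans hQ)]
    exact h.pot_diff k hk t _ ht hm
  · calc _ ≤ 2 * ((n:ℝ) + 1 / 2) ^ 2 / gapE n k ^ 3 / ((n:ℝ) + 1 / 2) * (4 / ((n:ℝ) + 1 / 2)) := by
          have h1 := h.up k hk
          have h2 : Real.pi / ((n:ℝ) + 1 / 2) ≤ 4 / ((n:ℝ) + 1 / 2) := by gcongr; exact Real.pi_le_four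
          have h3 := h.mono k hk
          apply mul_le_mul _ (h1.trans h2) (by linarith) (by positivity)
          gcongr
      _ = _ := by field_simp; norm_num

lemma log_all (h : NodeData n θ v) (i j : ℕ) (hi : i < n) (hj : j < n) :
    Real.log (v j) - Real.log (v i) ≤ 64 := by
  have hA : ∀ k, k < n → |Real.log (v k) - Real.log (v 0)| ≤ 32 := by
    intro k hk
    rw [← Finset.sum_range_sub (fun k => Real.log (v k)) k]
    refine (Finset.abs_sum_le_sum_abs _ _).trans ?_
    calc _ ≤ ∑ i ∈ Finset.range k, 8 * (1 / gapE n i ^ 2) := by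
          apply Finset.sum_le_sum
          intro i hi
          have hi' : i + 1 < n := by have := Finset.mem_range.1 hi; omega
          have he := gapE_ge_one hi'
          refine (h.log_diff i hi').trans ?_
          rw [mul_one_div]
          gcongr
          norm_num
      _ ≤ ∑ i ∈ Finset.range (n - 1), 8 * (1 / gapE n i ^ 2) := by
          apply Finset.sum_le_sum_of_subset_of_nonneg
          · intro i hi; simp at hi ⊢; omega
          · intro i _ _; positivity
      _ ≤ 32 := by
          rw [← Finset.mul_sum]; linarith [sum_gapE n]
  have h1 := abs_le.1 (hA i hi)
  have h2 := abs_le.1 (hA j hj)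
  linarith [h1.1, h2.2]

lemma sum_sin (h : NodeData n θ v) (hn : 1 ≤ n) : (n:ℝ) / 6 ≤ ∑ k ∈ Finset.range n, Real.sin (θ k) := by
  have hL : (0:ℝ) < (n:ℝ) + 1 / 2 := by positivity
  have hp := Real.pi_pos
  have h1 : ∀ k ∈ Finset.range n, ((k:ℝ) + 1) * (n - k) / (n + 1) / ((n:ℝ) + 1 / 2) ≤ Real.sin (θ k) := by
    intro k hk
    have hk := Finset.mem_range.1 hk
    have hk' : (k:ℝ) + 1 ≤ n := by exact_mod_cast hk
    have hk0 : (0:ℝ) ≤ k := Nat.cast_nonneg k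
    have a1 := h.theta_ge k hk
    have a2 := h.theta_le k hk
    set m := ((k:ℝ) + 1) * (n - k) / (n + 1) with hm
    have m0 : 0 ≤ m := by
      apply div_nonneg (mul_nonneg (by linarith) (by linarith)) (by positivity)
    have m1 : m ≤ (k:ℝ) + 1 := by
      rw [hm, div_le_iff₀ (by positivity)]; nlinarith
    have m2 : m ≤ (n:ℝ) - k := by
      rw [hm, div_le_iff₀ (by positivity)]; nlinarith
    have hs := jordan_min (θ k) (h.pos k hk).1.le (h.pos k hk).2.le (2 * m / ((n:ℝ) + 1 / 2))
      (le_trans (by gcongr) a1) (le_trans (by gcongr) a2)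
    refine le_trans ?_ hs
    have : 2 / Real.pi * (2 * m / ((n:ℝ) + 1 / 2)) = (4 / Real.pi) * (m / ((n:ℝ) + 1 / 2)) := by ring
    rw [this]
    have h4 : 1 ≤ 4 / Real.pi := by rw [le_div_iff₀ hp]; linarith [Real.pi_le_four]
    have h5 : 0 ≤ m / ((n:ℝ) + 1 / 2) := by positivity
    nlinarith
  refine le_trans ?_ (Finset.sum_le_sum h1)
  have h2 : ∀ N : ℕ, ∑ k ∈ Finset.range N, ((k:ℝ) + 1) * ((n:ℝ) - k) =
      n * (N * (N + 1) / 2) - (N * (N + 1) * (N - 1) / 3) := by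
    intro N
    induction N with
    | zero => simp
    | succ N ih => rw [Finset.sum_range_succ, ih]; push_cast; ring
  rw [← Finset.sum_div, ← Finset.sum_div, h2, div_div, le_div_iff₀ (by positivity)]
  have : (1:ℝ) ≤ n := by exact_mod_cast hn
  nlinarith [mul_nonneg (by linarith : (0:ℝ) ≤ n) (by linarith : (0:ℝ) ≤ (n:ℝ) - 1), mul_pos (by linarith : (0:ℝ) < n) (by linarith : (0:ℝ) < n)]

lemma v_le (h : NodeData n θ v) (hn : 1 ≤ n) (j : ℕ) (hj : j < n) : v j ≤ 12 * Real.exp 64 / n := by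
  have hn0 : (0:ℝ) < n := by exact_mod_cast hn
  have h1 := h.sum_sin hn
  have hvj := h.vpos j hj
  have h2 : v j * ∑ k ∈ Finset.range n, Real.sin (θ k) ≤ Real.exp 64 * 2 := by
    rw [← h.total, Finset.mul_sum, Finset.mul_sum]
    apply Finset.sum_le_sum
    intro k hk
    have hk := Finset.mem_range.1 hk
    have hs : 0 < Real.sin (θ k) := Real.sin_pos_of_pos_of_lt_pi (h.pos k hk).1 (h.pos k hk).2
    rw [← mul_assoc]
    apply mul_le_mul_of_nonneg_right _ hs.le
    have h3 := h.log_all k j hk hj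
    rw [← Real.exp_log hvj, ← Real.exp_log (h.vpos k hk), ← Real.exp_add]
    apply Real.exp_le_exp.2
    linarith
  rw [le_div_iff₀ hn0]
  have : v j * ((n:ℝ) / 6) ≤ v j * ∑ k ∈ Finset.range n, Real.sin (θ k) :=
    mul_le_mul_of_nonneg_left h1 hvj.le
  linarith

lemma exp_diff (a b V : ℝ) (ha : Real.exp a ≤ V) (hb : Real.exp b ≤ V) :
    |Real.exp b - Real.exp a| ≤ V * |b - a| := by
  wlog hab : a ≤ b generalizing a b
  · rw [abs_sub_comm, abs_sub_comm b a]
    exact this b a hb ha (by linarith)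
  have h1 := Real.add_one_le_exp (a - b)
  have h2 := Real.exp_pos b
  rw [abs_of_nonneg (by linarith [Real.exp_le_exp.2 hab]), abs_of_nonneg (by linarith)]
  have h3 : Real.exp a = Real.exp b * Real.exp (a - b) := by rw [← Real.exp_add]; congr 1; ring
  rw [h3]
  nlinarith

lemma v_diff (h : NodeData n θ v) (k : ℕ) (hk : k + 1 < n) :
    |v (k + 1) - v k| ≤ 12 * Real.exp 64 / n * (8 / gapE n k ^ 3) := by
  have h1 := h.v_le (by omega) k (by omega)
  have h2 := h.v_le (by omega) (k+1) (by omega)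
  rw [← Real.exp_log (h.vpos k (by omega))] at h1
  rw [← Real.exp_log (h.vpos (k+1) (by omega))] at h2
  have h3 := exp_diff _ _ _ h1 h2
  rw [Real.exp_log (h.vpos k (by omega)), Real.exp_log (h.vpos (k+1) (by omega))] at h3
  refine h3.trans (mul_le_mul_of_nonneg_left (h.log_diff k hk) (by positivity))

end NodeData

section part5

lemma sbp (b : ℕ → ℂ) (z : ℂ) (N : ℕ) :
    (1 - z) ^ 2 * ∑ k ∈ Finset.range (N + 2), b k * z ^ k =
      b 0 + (b 1 - 2 * b 0) * z
        + ∑ k ∈ Finset.range N, (b (k + 2) - 2 * b (k + 1) + b k) * z ^ (k + 2)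
        + (b N - 2 * b (N + 1)) * z ^ (N + 2) + b (N + 1) * z ^ (N + 3) := by
  induction N with
  | zero => simp [Finset.sum_range_succ]; ring
  | succ N ih =>
    rw [Finset.sum_range_succ, mul_add, ih, Finset.sum_range_succ]
    ring

lemma sbp_norm (b : ℕ → ℂ) (z : ℂ) (hz : ‖z‖ = 1) (N : ℕ) :
    ‖1 - z‖ ^ 2 * ‖∑ k ∈ Finset.range (N + 2), b k * z ^ k‖ ≤
      3 * ‖b 0‖ + ‖b 1‖ + ∑ k ∈ Finset.range N, ‖b (k + 2) - 2 * b (k + 1) + b k‖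
        + ‖b N‖ + 3 * ‖b (N + 1)‖ := by
  rw [← norm_pow, ← norm_mul, sbp]
  have h1 : ‖∑ k ∈ Finset.range N, (b (k + 2) - 2 * b (k + 1) + b k) * z ^ (k + 2)‖ ≤
      ∑ k ∈ Finset.range N, ‖b (k + 2) - 2 * b (k + 1) + b k‖ := by
    refine (norm_sum_le _ _).trans (Finset.sum_le_sum fun k _ => ?_)
    rw [norm_mul, norm_pow, hz, one_pow, mul_one]
  have h2 : ‖(b 1 - 2 * b 0) * z‖ ≤ ‖b 1‖ + 2 * ‖b 0‖ := by
    rw [norm_mul, hz, mul_one]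
    refine (norm_sub_le _ _).trans ?_
    simp
  have h3 : ‖(b N - 2 * b (N + 1)) * z ^ (N + 2)‖ ≤ ‖b N‖ + 2 * ‖b (N + 1)‖ := by
    rw [norm_mul, norm_pow, hz, one_pow, mul_one]
    refine (norm_sub_le _ _).trans ?_
    simp
  have h4 : ‖b (N + 1) * z ^ (N + 3)‖ = ‖b (N + 1)‖ := by
    rw [norm_mul, norm_pow, hz, one_pow, mul_one]
  refine (norm_add_le _ _).trans ?_
  rw [h4]
  have h5 := norm_add_le (b 0 + (b 1 - 2 * b 0) * z
        + ∑ k ∈ Finset.range N, (b (k + 2) - 2 * b (k + 1) + b k) * z ^ (k + 2))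
        ((b N - 2 * b (N + 1)) * z ^ (N + 2))
  have h6 := norm_add_le (b 0 + (b 1 - 2 * b 0) * z)
        (∑ k ∈ Finset.range N, (b (k + 2) - 2 * b (k + 1) + b k) * z ^ (k + 2))
  have h7 := norm_add_le (b 0) ((b 1 - 2 * b 0) * z)
  linarith

lemma cexp_two (x : ℝ) : ‖Complex.exp (Complex.I * x) - 1 - Complex.I * x‖ ≤ 2 * x ^ 2 := by
  have hn : ‖Complex.I * (x:ℂ)‖ = |x| := by simp
  rcases le_total |x| 1 with h | h
  · have := Complex.norm_exp_sub_one_sub_id_le (x := Complex.I * x) (by rw [hn]; exact h)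
    rw [hn, sq_abs] at this
    nlinarith [sq_nonneg x]
  · have h1 := norm_sub_le (Complex.exp (Complex.I * x) - 1) (Complex.I * x)
    have h2 := Real.norm_exp_I_mul_ofReal_sub_one_le (x := x)
    rw [hn] at h1
    rw [Real.norm_eq_abs] at h2
    have h3 : |x| ≤ x ^ 2 := by rw [← sq_abs]; nlinarith
    linarith

lemma second_diff (ζ : ℂ) (hζ : ‖ζ‖ = 1) (p q : ℝ) :
    ‖ζ * Complex.exp (Complex.I * p) - 2 * ζ + ζ * Complex.exp (Complex.I * q)‖ ≤
      2 * (p ^ 2 + q ^ 2) + |p + q| := by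
  have h0 : ζ * Complex.exp (Complex.I * p) - 2 * ζ + ζ * Complex.exp (Complex.I * q) =
    ζ * ((Complex.exp (Complex.I * p) - 1 - Complex.I * p) +
      (Complex.exp (Complex.I * q) - 1 - Complex.I * q) + Complex.I * ((p + q : ℝ) : ℂ)) := by
    push_cast; ring
  rw [h0, norm_mul, hζ, one_mul]
  have h1 := norm_add₃_le (a := Complex.exp (Complex.I * p) - 1 - Complex.I * p)
    (b := Complex.exp (Complex.I * q) - 1 - Complex.I * q) (c := Complex.I * ((p + q : ℝ) : ℂ))
  have h2 : ‖Complex.I * ((p + q : ℝ) : ℂ)‖ = |p + q| := by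
    rw [norm_mul, Complex.norm_I, one_mul, Complex.norm_real, Real.norm_eq_abs]
  linarith [cexp_two p, cexp_two q]

lemma second_diff_sin (t a b : ℝ) :
    |Real.sin (t + a) - 2 * Real.sin t + Real.sin (t + b)| ≤ 2 * (a ^ 2 + b ^ 2) + |a + b| := by
  have h1 := second_diff (Complex.exp (Complex.I * t)) (by rw [mul_comm, Complex.norm_exp_ofReal_mul_I]) a b
  refine le_trans ?_ h1
  refine le_trans (le_of_eq ?_) (Complex.abs_im_le_norm _)
  rw [← Complex.exp_add, ← Complex.exp_add, ← mul_add, ← mul_add, ← Complex.ofReal_add, ← Complex.ofReal_add]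
  simp only [mul_comm Complex.I, Complex.add_im, Complex.sub_im, Complex.exp_ofReal_mul_I_im]
  congr 3
  rw [Complex.mul_im, Complex.exp_ofReal_mul_I_im]
  simp

lemma prod_diff (ζ : ℂ) (hζ : ‖ζ‖ = 1) (p q w₁ w₀ w₂ : ℝ) :
    ‖(w₁:ℂ) * (ζ * Complex.exp (Complex.I * p)) - 2 * ((w₀:ℂ) * ζ) + (w₂:ℂ) * (ζ * Complex.exp (Complex.I * q))‖ ≤
      |w₁ - 2 * w₀ + w₂| + |w₁ - w₀| * |p| + |w₂ - w₀| * |q| + |w₀| * (2 * (p ^ 2 + q ^ 2) + |p + q|) := by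
  have h0 : (w₁:ℂ) * (ζ * Complex.exp (Complex.I * p)) - 2 * ((w₀:ℂ) * ζ) + (w₂:ℂ) * (ζ * Complex.exp (Complex.I * q)) =
    ((w₁ - 2 * w₀ + w₂ : ℝ) : ℂ) * ζ + ((w₁ - w₀ : ℝ) : ℂ) * (ζ * (Complex.exp (Complex.I * p) - 1))
     + ((w₂ - w₀ : ℝ) : ℂ) * (ζ * (Complex.exp (Complex.I * q) - 1))
     + (w₀ : ℂ) * (ζ * Complex.exp (Complex.I * p) - 2 * ζ + ζ * Complex.exp (Complex.I * q)) := by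
    push_cast; ring
  rw [h0]
  have hp := Real.norm_exp_I_mul_ofReal_sub_one_le (x := p)
  have hq := Real.norm_exp_I_mul_ofReal_sub_one_le (x := q)
  rw [Real.norm_eq_abs] at hp hq
  refine (norm_add_le _ _).trans (add_le_add ((norm_add_le _ _).trans (add_le_add ((norm_add_le _ _).trans (add_le_add ?_ ?_)) ?_)) ?_)
  · rw [norm_mul, hζ, mul_one, Complex.norm_real, Real.norm_eq_abs]
  · rw [norm_mul, norm_mul, hζ, one_mul, Complex.norm_real, Real.norm_eq_abs]; gcongr
  · rw [norm_mul, norm_mul, hζ, one_mul, Complex.norm_real, Real.norm_eq_abs]; gcongr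
  · rw [norm_mul, Complex.norm_real, Real.norm_eq_abs]
    exact mul_le_mul_of_nonneg_left (second_diff ζ hζ p q) (abs_nonneg _)

namespace NodeData
variable {n : ℕ} {θ v : ℕ → ℝ}

lemma sin_pos (h : NodeData n θ v) (k : ℕ) (hk : k < n) : 0 < Real.sin (θ k) :=
  Real.sin_pos_of_pos_of_lt_pi (h.pos k hk).1 (h.pos k hk).2

lemma sin_gap (h : NodeData n θ v) (k : ℕ) (hk : k + 1 < n) : Real.sin (θ k) ≤ 8 * gapE n k / n := by
  have hn : (0:ℝ) < n := by exact_mod_cast (show 0 < n by omega)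
  have h1 := h.sin_le k (by omega)
  have h2 := h.sin_le' k (by omega)
  have h3 : (k:ℝ) + 2 ≤ n := by exact_mod_cast hk
  have hk0 : (0:ℝ) ≤ k := Nat.cast_nonneg k
  rw [gapE]
  rcases min_cases ((k:ℝ) + 1) ((n:ℝ) - 1 - k) with ⟨h4, _⟩ | ⟨h4, _⟩ <;> rw [h4]
  · refine h1.trans ?_
    gcongr
    · norm_num
    · linarith
  · refine h2.trans ?_
    gcongr ?_ / ?_ <;> linarith

lemma sin_gap' (h : NodeData n θ v) (k : ℕ) (hk : k + 1 < n) : Real.sin (θ (k + 1)) ≤ 8 * gapE n k / n := by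
  have hn : (0:ℝ) < n := by exact_mod_cast (show 0 < n by omega)
  have h1 := h.sin_le (k+1) (by omega)
  have h2 := h.sin_le' (k+1) (by omega)
  have h3 : (k:ℝ) + 2 ≤ n := by exact_mod_cast hk
  have hk0 : (0:ℝ) ≤ k := Nat.cast_nonneg k
  push_cast at h1 h2
  rw [gapE]
  rcases min_cases ((k:ℝ) + 1) ((n:ℝ) - 1 - k) with ⟨h4, _⟩ | ⟨h4, _⟩ <;> rw [h4]
  · refine h1.trans ?_
    gcongr ?_ / ?_ <;> linarith
  · refine h2.trans ?_
    gcongr ?_ / ?_ <;> linarith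

/-- slowly varying phase -/
noncomputable def zeta (n : ℕ) (θ : ℕ → ℝ) (m k : ℕ) : ℂ :=
  Complex.exp (Complex.I * ((m * θ k - m * (Real.pi / ((n:ℝ) + 1 / 2)) * k : ℝ) : ℂ))

lemma zeta_norm (m k : ℕ) : ‖zeta n θ m k‖ = 1 := by
  rw [zeta, mul_comm, Complex.norm_exp_ofReal_mul_I]

lemma zeta_next (m k : ℕ) : zeta n θ m (k + 1) =
    zeta n θ m k * Complex.exp (Complex.I * ((-(m * eta n θ k) : ℝ) : ℂ)) := by
  rw [zeta, zeta, ← Complex.exp_add, ← mul_add, ← Complex.ofReal_add, eta]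
  congr 3
  push_cast; ring

lemma zeta_prev (m k : ℕ) : zeta n θ m k =
    zeta n θ m (k + 1) * Complex.exp (Complex.I * ((m * eta n θ k : ℝ) : ℂ)) := by
  rw [zeta, zeta, ← Complex.exp_add, ← mul_add, ← Complex.ofReal_add, eta]
  congr 3
  push_cast; ring

set_option maxHeartbeats 1600000 in
lemma arith (n V R u u' e e' s₁ s₀ s₂ v₁ v₀ v₂ D2s p q dpq : ℝ) (hn : 0 < n) (hV : 0 ≤ V) (hR : 1 ≤ R)
    (he : 1 ≤ e) (he' : 1 ≤ e') (hu : u = 1 / e ^ 2) (hu' : u' = 1 / e' ^ 2)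
    (hs₁ : 0 ≤ s₁) (hs₀ : 0 ≤ s₀) (hs₂ : 0 ≤ s₂)
    (h1 : s₁ ≤ 8 * e' / n) (h0 : s₀ ≤ 8 * e / n) (h0' : s₀ ≤ 8 * e' / n) (h2 : s₂ ≤ 8 * e / n)
    (hv₀ : 0 ≤ v₀) (hv₀' : v₀ ≤ V)
    (hv1 : |v₁ - v₀| ≤ V * (8 / e' ^ 3)) (hv2 : |v₂ - v₀| ≤ V * (8 / e ^ 3))
    (hd1 : |s₁ - s₀| ≤ 4 / n) (hd2 : |s₂ - s₀| ≤ 4 / n)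
    (hDs : s₁ - 2 * s₀ + s₂ = D2s) (hD : |D2s| ≤ 64 / n ^ 2 + 4 / n * (1 / e ^ 3 + 1 / e' ^ 3))
    (hp : |p| ≤ R * u') (hq : |q| ≤ R * u) (hpq : |dpq| ≤ 4 * R * (1 / e ^ 3 + 1 / e' ^ 3)) :
    |v₁ * s₁ - 2 * (v₀ * s₀) + v₂ * s₂| + |v₁ * s₁ - v₀ * s₀| * |p| + |v₂ * s₂ - v₀ * s₀| * |q|
      + |v₀ * s₀| * (2 * (p ^ 2 + q ^ 2) + |dpq|) ≤ V * R ^ 2 / n * (184 * (u + u') + 64 / n) := by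
  have he0 : 0 < e := by linarith
  have he0' : 0 < e' := by linarith
  have hu0 : 0 ≤ u := by rw [hu]; positivity
  have hu0' : 0 ≤ u' := by rw [hu']; positivity
  have hu1 : u ≤ 1 := by rw [hu]; exact div_le_one_of_le₀ (one_le_pow₀ he) (by positivity)
  have hu1' : u' ≤ 1 := by rw [hu']; exact div_le_one_of_le₀ (one_le_pow₀ he') (by positivity)
  have hc : 1 / e ^ 3 ≤ u := by
    rw [hu]; gcongr
    norm_num
  have hc' : 1 / e' ^ 3 ≤ u' := by
    rw [hu']; gcongr
    norm_num
  have A1 : |v₁ - v₀| * s₁ ≤ 64 * V * u' / n := by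
    calc _ ≤ V * (8 / e' ^ 3) * (8 * e' / n) := by gcongr
      _ = _ := by rw [hu']; field_simp; norm_num
  have A2 : |v₂ - v₀| * s₂ ≤ 64 * V * u / n := by
    calc _ ≤ V * (8 / e ^ 3) * (8 * e / n) := by gcongr
      _ = _ := by rw [hu]; field_simp; norm_num
  have B1 : |v₁ * s₁ - v₀ * s₀| ≤ 68 * V / n := by
    calc _ = |(v₁ - v₀) * s₁ + v₀ * (s₁ - s₀)| := by congr 1; ring
      _ ≤ |v₁ - v₀| * s₁ + v₀ * |s₁ - s₀| := by
        refine (abs_add_le _ _).trans (le_of_eq ?_)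
        rw [abs_mul, abs_mul, abs_of_nonneg hs₁, abs_of_nonneg hv₀]
      _ ≤ 64 * V * 1 / n + V * (4 / n) := by
        refine add_le_add (A1.trans ?_) ?_ <;> gcongr
      _ = _ := by ring
  have B2 : |v₂ * s₂ - v₀ * s₀| ≤ 68 * V / n := by
    calc _ = |(v₂ - v₀) * s₂ + v₀ * (s₂ - s₀)| := by congr 1; ring
      _ ≤ |v₂ - v₀| * s₂ + v₀ * |s₂ - s₀| := by
        refine (abs_add_le _ _).trans (le_of_eq ?_)
        rw [abs_mul, abs_mul, abs_of_nonneg hs₂, abs_of_nonneg hv₀]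
      _ ≤ 64 * V * 1 / n + V * (4 / n) := by
        refine add_le_add (A2.trans ?_) ?_ <;> gcongr
      _ = _ := by ring
  have C1 : |v₁ * s₁ - 2 * (v₀ * s₀) + v₂ * s₂| ≤ V / n * (68 * (u + u') + 64 / n) := by
    calc _ = |v₀ * D2s + (v₁ - v₀) * s₁ + (v₂ - v₀) * s₂| := by congr 1; rw [← hDs]; ring
      _ ≤ v₀ * |D2s| + |v₁ - v₀| * s₁ + |v₂ - v₀| * s₂ := by
        refine (abs_add_three _ _ _).trans (le_of_eq ?_)
        rw [abs_mul, abs_mul, abs_mul, abs_of_nonneg hs₁, abs_of_nonneg hs₂, abs_of_nonneg hv₀]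
      _ ≤ V * (64 / n ^ 2 + 4 / n * (u + u')) + 64 * V * u' / n + 64 * V * u / n := by
        refine add_le_add (add_le_add ?_ A1) A2
        refine mul_le_mul hv₀' (hD.trans ?_) (abs_nonneg _) hV
        gcongr
      _ = _ := by ring
  have D0 : |v₀ * s₀| ≤ V * s₀ := by rw [abs_mul, abs_of_nonneg hs₀, abs_of_nonneg hv₀]; gcongr
  have P1 : s₀ * p ^ 2 ≤ 8 * R ^ 2 * u' / n := by
    calc _ ≤ 8 * e' / n * (R * u') ^ 2 := by
          rw [← sq_abs p]; gcongr
      _ = 8 * R ^ 2 * (e' * u') * u' / n := by ring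
      _ ≤ 8 * R ^ 2 * 1 * u' / n := by
          have : e' * u' ≤ 1 := by
            rw [hu', mul_one_div, div_le_one (by positivity)]; nlinarith
          gcongr
      _ = _ := by ring
  have P2 : s₀ * q ^ 2 ≤ 8 * R ^ 2 * u / n := by
    calc _ ≤ 8 * e / n * (R * u) ^ 2 := by
          rw [← sq_abs q]; gcongr
      _ = 8 * R ^ 2 * (e * u) * u / n := by ring
      _ ≤ 8 * R ^ 2 * 1 * u / n := by
          have : e * u ≤ 1 := by
            rw [hu, mul_one_div, div_le_one (by positivity)]; nlinarith
          gcongr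
      _ = _ := by ring
  have P3 : s₀ * |dpq| ≤ 32 * R * (u + u') / n := by
    calc _ ≤ s₀ * (4 * R * (1 / e ^ 3 + 1 / e' ^ 3)) := by gcongr
      _ = 4 * R * (s₀ * (1 / e ^ 3) + s₀ * (1 / e' ^ 3)) := by ring
      _ ≤ 4 * R * (8 * e / n * (1 / e ^ 3) + 8 * e' / n * (1 / e' ^ 3)) := by gcongr
      _ = _ := by rw [hu, hu']; field_simp; norm_num
  have Q1 : |v₁ * s₁ - v₀ * s₀| * |p| ≤ 68 * V / n * (R * u') := by gcongr
  have Q2 : |v₂ * s₂ - v₀ * s₀| * |q| ≤ 68 * V / n * (R * u) := by gcongr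
  have Q3 : |v₀ * s₀| * (2 * (p ^ 2 + q ^ 2) + |dpq|) ≤
      V * (2 * (8 * R ^ 2 * u' / n + 8 * R ^ 2 * u / n) + 32 * R * (u + u') / n) := by
    calc _ ≤ V * s₀ * (2 * (p ^ 2 + q ^ 2) + |dpq|) := by gcongr
      _ = V * (2 * (s₀ * p ^ 2 + s₀ * q ^ 2) + s₀ * |dpq|) := by ring
      _ ≤ _ := by gcongr
  have hRR : R ≤ R ^ 2 := by nlinarith
  calc _ ≤ V / n * (68 * (u + u') + 64 / n) + 68 * V / n * (R * u') + 68 * V / n * (R * u)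
        + V * (2 * (8 * R ^ 2 * u' / n + 8 * R ^ 2 * u / n) + 32 * R * (u + u') / n) := by linarith
    _ = V / n * (1 * (68 * (u + u') + 64 / n) + R * (100 * (u + u')) + R ^ 2 * (16 * (u + u'))) := by ring
    _ ≤ V / n * (R ^ 2 * (68 * (u + u') + 64 / n) + R ^ 2 * (100 * (u + u')) + R ^ 2 * (16 * (u + u'))) := by
        gcongr
        linarith
    _ = _ := by ring

lemma interior (h : NodeData n θ v) (k : ℕ) (hk : k + 2 < n) (m : ℕ) (hm : n ≤ m) :
    ‖((v (k + 2) * Real.sin (θ (k + 2)) : ℝ) : ℂ) * zeta n θ m (k + 2)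
      - 2 * (((v (k + 1) * Real.sin (θ (k + 1)) : ℝ) : ℂ) * zeta n θ m (k + 1))
      + ((v k * Real.sin (θ k) : ℝ) : ℂ) * zeta n θ m k‖ ≤
    (12 * Real.exp 64 / n) * ((m:ℝ) / n) ^ 2 / n *
      (184 * (1 / gapE n k ^ 2 + 1 / gapE n (k + 1) ^ 2) + 64 / n) := by
  have hn : (0:ℝ) < n := by exact_mod_cast (show 0 < n by omega)
  have hnL : (n:ℝ) ≤ (n:ℝ) + 1 / 2 := by linarith
  have hmn : (n:ℝ) ≤ m := by exact_mod_cast hm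
  have he := gapE_ge_one (n := n) (k := k) (by omega)
  have he' := gapE_ge_one (n := n) (k := k + 1) (by omega)
  rw [zeta_next m (k + 1), zeta_prev (n := n) (θ := θ) m k]
  refine (prod_diff _ (zeta_norm m (k+1)) _ _ _ _ _).trans ?_
  have hpi : Real.pi / ((n:ℝ) + 1 / 2) ≤ 4 / n := by
    gcongr; exact Real.pi_le_four
  have a0 := h.mono k (by omega)
  have a1 := h.mono (k + 1) (by omega)
  have a2 := h.up k (by omega)
  have a3 := h.up (k + 1) (by omega)
  have hη := h.eta_diff k hk
  have hη' : |eta n θ (k + 1) - eta n θ k| ≤ 4 / n * (1 / gapE n k ^ 3 + 1 / gapE n (k + 1) ^ 3) := by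
    refine hη.trans ?_
    gcongr
  have hmeta : ∀ j, j + 1 < n → |(m:ℝ) * eta n θ j| ≤ (m:ℝ) / n * (1 / gapE n j ^ 2) := by
    intro j hj
    have hg := gapE_ge_one hj
    rw [abs_of_nonneg (mul_nonneg (by positivity) (h.eta_nonneg j hj))]
    calc _ ≤ (m:ℝ) * (1 / ((n:ℝ) + 1 / 2) / gapE n j ^ 2) := by gcongr; exact h.eta_le j hj
      _ ≤ (m:ℝ) * (1 / (n:ℝ) / gapE n j ^ 2) := by gcongr
      _ = _ := by ring
  refine arith n _ _ _ _ (gapE n k) (gapE n (k+1)) _ _ _ _ _ _ _ _ _ _ hn (by positivity) ?_ he he' rfl rfl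
    (h.sin_pos _ (by omega)).le (h.sin_pos _ (by omega)).le (h.sin_pos _ (by omega)).le
    (h.sin_gap' (k+1) (by omega)) (h.sin_gap' k (by omega)) (h.sin_gap (k+1) (by omega)) (h.sin_gap k (by omega))
    (h.vpos _ (by omega)).le (h.v_le (by omega) _ (by omega)) (h.v_diff (k+1) (by omega)) ?_ ?_ ?_ rfl ?_ ?_ ?_ ?_
  · rw [le_div_iff₀ hn]; linarith
  · rw [abs_sub_comm]; exact h.v_diff k (by omega)
  · refine (sin_lip _ _).trans ?_
    rw [abs_of_nonneg (by linarith)]; exact a3.trans hpi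
  · refine (sin_lip _ _).trans ?_
    rw [abs_sub_comm, abs_of_nonneg (by linarith)]; exact a2.trans hpi
  · have hh := second_diff_sin (θ (k+1)) (θ (k+1+1) - θ (k+1)) (θ k - θ (k+1))
    rw [add_sub_cancel, add_sub_cancel] at hh
    refine hh.trans ?_
    have e1 : (θ (k+1+1) - θ (k+1)) ^ 2 ≤ (4 / (n:ℝ)) ^ 2 := pow_le_pow_left₀ (by linarith) (a3.trans hpi) 2
    have e2 : (θ k - θ (k+1)) ^ 2 ≤ (4 / (n:ℝ)) ^ 2 := by
      rw [← neg_sq]; exact pow_le_pow_left₀ (by linarith) (by linarith) 2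
    have e3 : |θ (k+1+1) - θ (k+1) + (θ k - θ (k+1))| = |eta n θ (k + 1) - eta n θ k| := by
      rw [eta, eta, ← abs_neg]; congr 1; ring
    have e4 : 64 / (n:ℝ) ^ 2 = 2 * ((4 / (n:ℝ)) ^ 2 + (4 / (n:ℝ)) ^ 2) := by ring
    rw [e3, e4]
    gcongr
  · rw [abs_neg]; exact hmeta (k+1) (by omega)
  · exact hmeta k (by omega)
  · have : -((m:ℝ) * eta n θ (k + 1)) + m * eta n θ k = -(m * (eta n θ (k + 1) - eta n θ k)) := by ring
    rw [this, abs_neg, abs_mul, abs_of_nonneg (by positivity : (0:ℝ) ≤ m)]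
    calc _ ≤ (m:ℝ) * (4 / n * (1 / gapE n k ^ 3 + 1 / gapE n (k + 1) ^ 3)) := by gcongr
      _ = _ := by ring

/-- constant in the main estimate -/
noncomputable def KK : ℝ := 1576 * (12 * Real.exp 64)

lemma main_est (h : NodeData n θ v) (hn2 : 2 ≤ n) (m : ℕ) (hm : n ≤ m) :
    (2 * Real.sin (m * Real.pi / (2 * n + 1))) ^ 2 *
      |∑ k ∈ Finset.range n, v k * Real.sin (θ k) * Real.cos (m * θ k)| ≤ KK * ((m:ℝ) / n) ^ 2 / n ^ 2 := by
  obtain ⟨N, rfl⟩ : ∃ N, n = N + 2 := ⟨n - 2, by omega⟩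
  set n := N + 2 with hnN
  have hn : (0:ℝ) < n := by exact_mod_cast (show 0 < n by omega)
  have hmn : (n:ℝ) ≤ m := by exact_mod_cast hm
  have hR : 1 ≤ (m:ℝ) / n := by rw [le_div_iff₀ hn]; linarith
  set z := Complex.exp (Complex.I * ((m * (Real.pi / ((n:ℝ) + 1 / 2)) : ℝ) : ℂ)) with hz
  set b : ℕ → ℂ := fun k => ((v k * Real.sin (θ k) : ℝ) : ℂ) * zeta n θ m k with hb
  have h1 := sbp_norm b z (by rw [hz, mul_comm, Complex.norm_exp_ofReal_mul_I]) N
  have hzk : ∀ k, b k * z ^ k = ((v k * Real.sin (θ k) : ℝ) : ℂ) * Complex.exp (((m * θ k : ℝ) : ℂ) * Complex.I) := by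
    intro k
    rw [hb, hz]
    simp only
    rw [mul_assoc, zeta, ← Complex.exp_nat_mul, ← Complex.exp_add]
    congr 2
    push_cast; ring
  have h2 : |∑ k ∈ Finset.range n, v k * Real.sin (θ k) * Real.cos (m * θ k)| ≤
      ‖∑ k ∈ Finset.range (N + 2), b k * z ^ k‖ := by
    refine le_trans (le_of_eq ?_) (Complex.abs_re_le_norm _)
    rw [Complex.re_sum]
    congr 1
    apply Finset.sum_congr rfl
    intro k _
    rw [hzk, Complex.re_ofReal_mul, Complex.exp_ofReal_mul_I_re]
  have h3 : ‖1 - z‖ ^ 2 = (2 * Real.sin (m * Real.pi / (2 * n + 1))) ^ 2 := by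
    rw [norm_sub_rev, hz, Complex.norm_exp_I_mul_ofReal_sub_one, Real.norm_eq_abs, sq_abs]
    congr 3
    field_simp
  rw [h3] at h1
  refine (mul_le_mul_of_nonneg_left h2 (sq_nonneg _)).trans (h1.trans ?_)
  have hV : 0 ≤ 12 * Real.exp 64 / (n:ℝ) := by positivity
  have hbn : ∀ k, k < n → ‖b k‖ = v k * Real.sin (θ k) := by
    intro k hk
    rw [hb]; simp only
    rw [norm_mul, zeta_norm, mul_one, Complex.norm_real, Real.norm_eq_abs, abs_of_pos]
    exact mul_pos (h.vpos k hk) (h.sin_pos k hk)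
  have hbb : ∀ k, k < n → ∀ c, 0 ≤ c → Real.sin (θ k) ≤ c / ((n:ℝ) + 1 / 2) →
      ‖b k‖ ≤ 12 * Real.exp 64 / (n:ℝ) * (c / n) := by
    intro k hk c hc hs
    rw [hbn k hk]
    apply mul_le_mul (h.v_le (by omega) k hk) (hs.trans _) (h.sin_pos k hk).le hV
    gcongr; linarith
  have b0 := hbb 0 (by omega) 4 (by norm_num) (by simpa using h.sin_le 0 (by omega))
  have b1 := hbb 1 (by omega) 8 (by norm_num) (by
    refine (h.sin_le 1 (by omega)).trans (le_of_eq ?_); norm_num)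
  have b2 := hbb N (by omega) 8 (by norm_num) (by
    refine (h.sin_le' N (by omega)).trans (le_of_eq ?_); rw [hnN]; push_cast; congr 1; ring)
  have b3 := hbb (N+1) (by omega) 4 (by norm_num) (by
    refine (h.sin_le' (N+1) (by omega)).trans (le_of_eq ?_); rw [hnN]; push_cast; congr 1; ring)
  set V := 12 * Real.exp 64 / (n:ℝ) with hVd
  have hI : ∑ k ∈ Finset.range N, ‖b (k + 2) - 2 * b (k + 1) + b k‖ ≤ V * ((m:ℝ) / n) ^ 2 / n * 1536 := by
    calc _ ≤ ∑ k ∈ Finset.range N, V * ((m:ℝ) / n) ^ 2 / n *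
          (184 * (1 / gapE n k ^ 2 + 1 / gapE n (k + 1) ^ 2) + 64 / n) := by
          apply Finset.sum_le_sum
          intro k hk
          exact h.interior k (by have := Finset.mem_range.1 hk; omega) m hm
      _ = V * ((m:ℝ) / n) ^ 2 / n * (184 * (∑ k ∈ Finset.range N, 1 / gapE n k ^ 2 +
            ∑ k ∈ Finset.range N, 1 / gapE n (k + 1) ^ 2) + N * (64 / n)) := by
          rw [← Finset.mul_sum, Finset.sum_add_distrib, ← Finset.mul_sum, Finset.sum_add_distrib]
          simp
      _ ≤ _ := by
          have s0 := sum_gapE n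
          rw [show n - 1 = N + 1 by omega] at s0
          have s1 := s0
          rw [Finset.sum_range_succ] at s0
          rw [Finset.sum_range_succ'] at s1
          have p0 : 0 ≤ 1 / gapE n N ^ 2 := by positivity
          have p1 : 0 ≤ 1 / gapE n 0 ^ 2 := by positivity
          have p2 : (N:ℝ) * (64 / n) ≤ 64 := by
            rw [mul_div_assoc', div_le_iff₀ hn, hnN]; push_cast; linarith
          apply mul_le_mul_of_nonneg_left _ (by positivity)
          linarith
  have hbd : 3 * ‖b 0‖ + ‖b 1‖ + ‖b N‖ + 3 * ‖b (N + 1)‖ ≤ V * ((m:ℝ) / n) ^ 2 / n * 40 := by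
    calc _ ≤ V / n * 40 * 1 := by
          have : V / n * 40 * 1 = 3 * (V * (4 / n)) + V * (8 / n) + V * (8 / n) + 3 * (V * (4 / n)) := by ring
          linarith
      _ ≤ V / n * 40 * ((m:ℝ) / n) ^ 2 := by
          gcongr; exact one_le_pow₀ hR
      _ = _ := by ring
  calc _ ≤ V * ((m:ℝ) / n) ^ 2 / n * 1576 := by linarith
    _ = _ := by rw [hVd, KK]; field_simp

lemma S_le (h : NodeData n θ v) (m : ℕ) :
    |∑ k ∈ Finset.range n, v k * Real.sin (θ k) * Real.cos (m * θ k)| ≤ 2 := by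
  rw [← h.total]
  refine (Finset.abs_sum_le_sum_abs _ _).trans (Finset.sum_le_sum fun k hk => ?_)
  have hk := Finset.mem_range.1 hk
  rw [abs_mul, abs_of_pos (mul_pos (h.vpos k hk) (h.sin_pos k hk))]
  exact mul_le_of_le_one_right (mul_pos (h.vpos k hk) (h.sin_pos k hk)).le (Real.abs_cos_le_one _)

end NodeData
end part5

section part1

lemma cont_comp_cos {f : ℝ → ℝ} (hf : ContinuousOn f (Set.Icc (-1) 1)) :
    Continuous fun t : ℝ => f (Real.cos t) :=
  hf.comp_continuous Real.continuous_cos fun t => ⟨Real.neg_one_le_cos t, Real.cos_le_one t⟩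

/-- lift of `f ∘ cos` to the circle -/
noncomputable def circF (f : ℝ → ℝ) (hf : ContinuousOn f (Set.Icc (-1) 1)) :
    C(AddCircle (2 * Real.pi), ℂ) where
  toFun x := ((f (Real.Angle.cos x) : ℝ) : ℂ)
  continuous_toFun := by
    have h : Continuous fun x : Real.Angle => f (Real.Angle.cos x) := by
      refine hf.comp_continuous Real.Angle.continuous_cos ?_
      intro x
      induction x using Real.Angle.induction_on with
      | _ t => rw [Real.Angle.cos_coe]; exact ⟨Real.neg_one_le_cos t, Real.cos_le_one t⟩
    exact Complex.continuous_ofReal.comp h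

lemma circF_coe (f : ℝ → ℝ) (hf : ContinuousOn f (Set.Icc (-1) 1)) (t : ℝ) :
    circF f hf (t : AddCircle (2 * Real.pi)) = ((f (Real.cos t) : ℝ) : ℂ) := rfl

lemma fourier_two_pi (n : ℤ) (t : ℝ) :
    fourier n (t : AddCircle (2 * Real.pi)) = Complex.exp (((n * t : ℝ) : ℂ) * Complex.I) := by
  rw [fourier_coe_apply]
  congr 1
  have : (Real.pi : ℂ) ≠ 0 := by exact_mod_cast Real.pi_ne_zero
  push_cast
  field_simp

lemma integral_even_split (F : ℝ → ℂ) (hF : Continuous F) (a : ℝ) :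
    ∫ t in (-a)..a, F t = ∫ t in (0:ℝ)..a, (F t + F (-t)) := by
  rw [← intervalIntegral.integral_add_adjacent_intervals (hF.intervalIntegrable (-a) 0) (hF.intervalIntegrable 0 a),
    intervalIntegral.integral_add (hF.intervalIntegrable _ _)
      ((show Continuous fun t => F (-t) from hF.comp continuous_neg).intervalIntegrable _ _)]
  have := intervalIntegral.integral_comp_neg (a := 0) (b := a) F
  rw [neg_zero] at this
  rw [this, add_comm]

lemma hasSum_of_eq {a b : ℕ → ℝ} {c : ℝ} (h : HasSum b c) (e : ∀ m, a m = b m) : HasSum a c := by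
  rwa [show a = b from funext e]

instance : Fact (0 < 2 * Real.pi) := ⟨Real.two_pi_pos⟩

lemma circF_coeff (f : ℝ → ℝ) (hf : ContinuousOn f (Set.Icc (-1) 1)) (n : ℤ) (m : ℕ) (hm : |n| = m) :
    fourierCoeff (circF f hf) n = ((chebCoeff f m / 2 : ℝ) : ℂ) := by
  have hc := cont_comp_cos hf
  rw [fourierCoeff_eq_intervalIntegral _ n (-Real.pi), show -Real.pi + 2 * Real.pi = Real.pi by ring]
  simp only [circF_coe, fourier_two_pi]
  have hcc : Continuous fun t : ℝ => ((f (Real.cos t) : ℝ) : ℂ) := Complex.continuous_ofReal.comp hc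
  rw [integral_even_split _ (by
    simp only [smul_eq_mul]
    refine Continuous.mul ?_ hcc
    exact Complex.continuous_exp.comp ((Complex.continuous_ofReal.comp (continuous_const.mul continuous_id)).mul continuous_const))]
  have h1 : ∀ t : ℝ, Complex.exp ((((-n : ℤ) * t : ℝ) : ℂ) * Complex.I) • ((f (Real.cos t) : ℝ) : ℂ) +
      Complex.exp ((((-n : ℤ) * (-t) : ℝ) : ℂ) * Complex.I) • ((f (Real.cos (-t)) : ℝ) : ℂ) =
      ((2 * (f (Real.cos t) * Real.cos (m * t)) : ℝ) : ℂ) := by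
    intro t
    rw [Real.cos_neg, ← add_smul]
    have h2 : (((-n : ℤ) * (-t) : ℝ) : ℂ) = ((n * t : ℝ) : ℂ) := by push_cast; ring
    have h3 : (((-n : ℤ) * t : ℝ) : ℂ) = -((n * t : ℝ) : ℂ) := by push_cast; ring
    have h4 : Real.cos (m * t) = Real.cos (n * t) := by
      have hm' : (m:ℝ) = |(n:ℝ)| := by rw [← Int.cast_abs, hm]; simp
      rcases abs_choice (n:ℝ) with h | h <;> rw [hm', h]
      rw [neg_mul, Real.cos_neg]
    rw [h2, h3, h4, add_comm]
    have h5 := Complex.two_cos ((n * t : ℝ) : ℂ)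
    rw [← h5, ← Complex.ofReal_cos, smul_eq_mul]
    push_cast; ring
  simp only [h1]
  rw [intervalIntegral.integral_ofReal, intervalIntegral.integral_const_mul, chebCoeff, Complex.real_smul, ← Complex.ofReal_mul]
  congr 1
  have := Real.pi_ne_zero
  field_simp

lemma cheb_hasSum (f : ℝ → ℝ) (hf : ContinuousOn f (Set.Icc (-1) 1))
    (hs : Summable fun m : ℕ => |chebCoeff f m|) (t : ℝ) :
    HasSum (fun m : ℕ => chebCoeff f m * Real.cos (m * t)) (f (Real.cos t) + chebCoeff f 0 / 2) := by
  have hco : ∀ m : ℕ, fourierCoeff (circF f hf) (m:ℤ) = ((chebCoeff f m / 2 : ℝ) : ℂ) :=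
    fun m => circF_coeff f hf m m (by simp)
  have hco' : ∀ m : ℕ, fourierCoeff (circF f hf) (-(m:ℤ)) = ((chebCoeff f m / 2 : ℝ) : ℂ) :=
    fun m => circF_coeff f hf (-m) m (by simp)
  have hs' : Summable fun m : ℕ => ((chebCoeff f m / 2 : ℝ) : ℂ) :=
    Complex.summable_ofReal.2 (hs.of_abs.div_const 2)
  have hS : Summable (fourierCoeff (circF f hf)) := by
    apply Summable.of_nat_of_neg
    · simpa only [hco] using hs'
    · simpa only [hco'] using hs'
  have h1 := (has_pointwise_sum_fourier_series_of_summable hS (t : AddCircle (2 * Real.pi))).nat_add_neg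
  rw [circF_coe] at h1
  rw [← Complex.hasSum_ofReal]
  convert h1 using 1
  · ext m
    rw [hco, hco', fourier_two_pi, fourier_two_pi, ← smul_add]
    have h3 : (((-(m:ℤ) : ℤ) * t : ℝ) : ℂ) = -((m * t : ℝ) : ℂ) := by push_cast; ring
    have h5 := Complex.two_cos ((m * t : ℝ) : ℂ)
    rw [h3, Int.cast_natCast, ← h5, ← Complex.ofReal_cos, smul_eq_mul]
    push_cast; ring
  · have := hco 0
    simp only [Nat.cast_zero] at this
    rw [this, fourier_two_pi]
    simp

open Polynomial in
lemma int_T (m : ℕ) (hm : 2 ≤ m) : |∫ t in (-1:ℝ)..1, (Chebyshev.T ℝ (m:ℤ)).eval t| ≤ 4 / (m:ℝ) ^ 2 := by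
  have hm' : (2:ℝ) ≤ m := by exact_mod_cast hm
  have hd : ∀ t ∈ Set.uIcc (-1:ℝ) 1, HasDerivAt (fun t => ((Chebyshev.T ℝ ((m:ℤ)+1)).eval t / (m + 1) -
      (Chebyshev.T ℝ ((m:ℤ)-1)).eval t / (m - 1)) / 2) ((Chebyshev.T ℝ (m:ℤ)).eval t) t := by
    intro t _
    have h1 := (Chebyshev.T ℝ ((m:ℤ)+1)).hasDerivAt t
    have h2 := (Chebyshev.T ℝ ((m:ℤ)-1)).hasDerivAt t
    have h3 := ((h1.div_const ((m:ℝ) + 1)).sub (h2.div_const ((m:ℝ) - 1))).div_const 2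
    refine h3.congr_deriv ?_
    rw [Chebyshev.T_derivative_eq_U, Chebyshev.T_derivative_eq_U]
    have h4 := congrArg (Polynomial.eval t) (Chebyshev.T_eq_U_sub_X_mul_U ℝ (m:ℤ))
    have h5 := congrArg (Polynomial.eval t) (Chebyshev.U_eq ℝ (m:ℤ))
    simp at h4 h5 ⊢
    have e1 : (m:ℝ) - 1 ≠ 0 := by linarith
    rw [h4, show (m:ℤ) - 1 - 1 = m - 2 by ring]
    field_simp
    linarith
  rw [intervalIntegral.integral_eq_sub_of_hasDerivAt hd ((Polynomial.continuous _).intervalIntegrable _ _)]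
  have e1 : 0 < (m:ℝ) - 1 := by linarith
  simp only [Chebyshev.T_eval_one, Chebyshev.T_eval_neg_one]
  have hu : (((m:ℤ)-1).negOnePow) = (((m:ℤ)+1).negOnePow) := by
    rw [Int.negOnePow_eq_iff]; exact ⟨-1, by ring⟩
  rw [hu]
  have hb : ∀ u : ℤˣ, |(1 / ((m:ℝ) + 1) - 1 / ((m:ℝ) - 1)) / 2 - (((u : ℤ):ℝ) / ((m:ℝ) + 1) - ((u:ℤ):ℝ) / ((m:ℝ) - 1)) / 2| ≤ 4 / (m:ℝ) ^ 2 := by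
    intro u
    have hm2 : 0 < (m:ℝ) ^ 2 - 1 := by nlinarith
    have e2 : (1 / ((m:ℝ) + 1) - 1 / ((m:ℝ) - 1)) / 2 - (((u : ℤ):ℝ) / ((m:ℝ) + 1) - ((u:ℤ):ℝ) / ((m:ℝ) - 1)) / 2
       = - ((1 - ((u:ℤ):ℝ)) / ((m:ℝ) ^ 2 - 1)) := by
      have : (m:ℝ) ^ 2 - 1 = (m + 1) * (m - 1) := by ring
      rw [this]; field_simp; ring
    rw [e2, abs_neg, abs_div, abs_of_pos hm2]
    have : |1 - ((u:ℤ):ℝ)| ≤ 2 := by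
      rcases Int.units_eq_one_or u with h | h <;> rw [h] <;> norm_num
    rw [div_le_div_iff₀ hm2 (by positivity)]
    nlinarith [sq_nonneg (m:ℝ)]
  exact hb _

open Polynomial in
lemma T_abs_le (m : ℕ) (t : ℝ) (ht : t ∈ Set.Icc (-1:ℝ) 1) : |(Chebyshev.T ℝ (m:ℤ)).eval t| ≤ 1 := by
  rw [← Real.cos_arccos ht.1 ht.2, Chebyshev.T_real_cos]
  exact Real.abs_cos_le_one _

open Polynomial in
lemma error_hasSum (f : ℝ → ℝ) (hf : ContinuousOn f (Set.Icc (-1) 1))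
    (hs : Summable fun m : ℕ => |chebCoeff f m|) {n : ℕ} (hn : 1 ≤ n) (x w : Fin n → ℝ)
    (hx : ∀ k, x k ∈ Set.Icc (-1:ℝ) 1)
    (ex : ∀ p : Polynomial ℝ, p.natDegree ≤ 2 * n - 1 →
        ∑ k : Fin n, w k * p.eval (x k) = ∫ t in (-1:ℝ)..1, p.eval t) :
    HasSum (fun m : ℕ => chebCoeff f m * ((∫ t in (-1:ℝ)..1, (Chebyshev.T ℝ (m:ℤ)).eval t) -
      ∑ k, w k * (Chebyshev.T ℝ (m:ℤ)).eval (x k)))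
      ((∫ t in (-1:ℝ)..1, f t) - ∑ k : Fin n, w k * f (x k)) := by
  have hT : ∀ t ∈ Set.Icc (-1:ℝ) 1, HasSum (fun m : ℕ => chebCoeff f m * (Chebyshev.T ℝ (m:ℤ)).eval t)
      (f t + chebCoeff f 0 / 2) := by
    intro t ht
    have := cheb_hasSum f hf hs (Real.arccos t)
    rw [Real.cos_arccos ht.1 ht.2] at this
    convert this using 2 with m
    conv_lhs => rw [← Real.cos_arccos ht.1 ht.2, Chebyshev.T_real_cos]
    simp
  have hsub : ∀ t, t ∈ Set.uIoc (-1:ℝ) 1 → t ∈ Set.Icc (-1:ℝ) 1 := by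
    intro t ht
    rw [Set.uIoc_of_le (by norm_num)] at ht
    exact ⟨ht.1.le, ht.2⟩
  have h1 := intervalIntegral.hasSum_integral_of_dominated_convergence (μ := MeasureTheory.volume) (a := -1) (b := 1)
    (F := fun (m : ℕ) t => chebCoeff f m * (Chebyshev.T ℝ (m:ℤ)).eval t)
    (f := fun t => f t + chebCoeff f 0 / 2) (fun m _ => |chebCoeff f m|)
    (fun m => (continuous_const.mul (Polynomial.continuous _)).aestronglyMeasurable)
    (fun m => Filter.Eventually.of_forall fun t ht => by
      rw [Real.norm_eq_abs, abs_mul]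
      exact mul_le_of_le_one_right (abs_nonneg _) (T_abs_le m t (hsub t ht)))
    (Filter.Eventually.of_forall fun t ht => hs)
    (by simp)
    (Filter.Eventually.of_forall fun t ht => hT t (hsub t ht))
  have h2 : HasSum (fun m : ℕ => ∑ k, w k * (chebCoeff f m * (Chebyshev.T ℝ (m:ℤ)).eval (x k)))
      (∑ k, w k * (f (x k) + chebCoeff f 0 / 2)) :=
    hasSum_sum fun k _ => (hT (x k) (hx k)).mul_left (w k)
  have h3 := h1.sub h2
  have hfi : IntervalIntegrable f MeasureTheory.volume (-1) 1 := by
    apply ContinuousOn.intervalIntegrable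
    rwa [Set.uIcc_of_le (by norm_num)]
  have h0 := ex 1 (by simp)
  simp only [Polynomial.eval_one, mul_one] at h0
  have e1 : (∫ t in (-1:ℝ)..1, (f t + chebCoeff f 0 / 2)) - ∑ k, w k * (f (x k) + chebCoeff f 0 / 2) =
      (∫ t in (-1:ℝ)..1, f t) - ∑ k : Fin n, w k * f (x k) := by
    rw [intervalIntegral.integral_add hfi (by simp)]
    simp only [mul_add, Finset.sum_add_distrib, ← Finset.sum_mul]
    rw [h0]
    simp
    ring
  rw [e1] at h3
  refine hasSum_of_eq h3 fun m => ?_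
  rw [intervalIntegral.integral_const_mul, mul_sub, Finset.mul_sum]
  congr 1
  apply Finset.sum_congr rfl
  intro k _
  ring
end part1

section part6

lemma KK_ge : 18912 ≤ NodeData.KK := by
  rw [NodeData.KK]
  have := Real.one_le_exp (show (0:ℝ) ≤ 64 by norm_num)
  linarith

/-- weight in the double sum -/
noncomputable def hh (n i : ℕ) : ℝ := (max 1 |(i:ℝ) - n|) ^ (-(3/2) : ℝ)

lemma hh_pos (n i : ℕ) : 0 < hh n i := Real.rpow_pos_of_pos (lt_max_of_lt_left one_pos) _

lemma main_est' {n : ℕ} {θ v : ℕ → ℝ} (h : NodeData n θ v) (hn : 1 ≤ n) (m : ℕ) (hm : n ≤ m) :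
    (2 * Real.sin (m * Real.pi / (2 * n + 1))) ^ 2 *
      |∑ k ∈ Finset.range n, v k * Real.sin (θ k) * Real.cos (m * θ k)| ≤ NodeData.KK * ((m:ℝ) / n) ^ 2 / n ^ 2 := by
  rcases Nat.lt_or_ge 1 n with h1 | h1
  · exact h.main_est h1 m hm
  · obtain rfl : n = 1 := le_antisymm h1 hn
    have hS := h.S_le m
    have hs : (2 * Real.sin (m * Real.pi / (2 * (1:ℕ) + 1))) ^ 2 ≤ 4 := by
      nlinarith [Real.sin_sq_le_one (m * Real.pi / (2 * (1:ℕ) + 1))]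
    have hm' : (1:ℝ) ≤ m := by exact_mod_cast hm
    calc _ ≤ (4:ℝ) * 2 := mul_le_mul hs hS (abs_nonneg _) (by norm_num)
      _ ≤ NodeData.KK * 1 := by linarith [KK_ge]
      _ ≤ NodeData.KK * (m:ℝ) ^ 2 := by
        have := KK_ge
        gcongr
        exact one_le_pow₀ hm'
      _ = _ := by simp

lemma S_bound {n : ℕ} {θ v : ℕ → ℝ} (h : NodeData n θ v) (hn : 1 ≤ n) (r i : ℕ) (hi : i < 2 * n + 1) (m : ℕ)
    (hm : m = n + 1 + (r * (2 * n + 1) + i)) :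
    |∑ k ∈ Finset.range n, v k * Real.sin (θ k) * Real.cos (m * θ k)| ≤
      9 * NodeData.KK * ((r:ℝ) + 1) ^ (3/2 : ℝ) * hh n i := by
  have hK := KK_ge
  have hS := h.S_le m
  have hM := main_est' h hn m (by omega)
  set S := |∑ k ∈ Finset.range n, v k * Real.sin (θ k) * Real.cos (m * θ k)| with hSd
  have hS0 : 0 ≤ S := abs_nonneg _
  have hn0 : (1:ℝ) ≤ n := by exact_mod_cast hn
  have hr0 : (0:ℝ) ≤ r := Nat.cast_nonneg r
  have hr1 : 1 ≤ ((r:ℝ) + 1) ^ (3/2 : ℝ) := Real.one_le_rpow (by linarith) (by norm_num)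
  have hmr : (m:ℝ) = (r + 1) * (2 * n + 1) + ((i:ℝ) - n) := by rw [hm]; push_cast; ring
  by_cases hin : i = n
  · have : hh n i = 1 := by rw [hh, hin]; simp
    rw [this]
    nlinarith
  have hj : 1 ≤ |(i:ℝ) - n| := by
    have : 1 ≤ |(i:ℤ) - n| := Int.one_le_abs (by omega)
    exact_mod_cast this
  have hjn : |(i:ℝ) - n| ≤ n := by
    have : |(i:ℤ) - n| ≤ n := abs_le.2 ⟨by omega, by omega⟩
    exact_mod_cast this
  have hJ : hh n i = |(i:ℝ) - n| ^ (-(3/2) : ℝ) := by rw [hh, max_eq_right hj]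
  rw [hJ]
  have hsin : (Real.sin (m * Real.pi / (2 * n + 1))) ^ 2 = Real.sin (|(i:ℝ) - n| * Real.pi / (2 * n + 1)) ^ 2 := by
    have e1 : (m:ℝ) * Real.pi / (2 * n + 1) = ((i:ℝ) - n) * Real.pi / (2 * n + 1) + (r + 1 : ℕ) * Real.pi := by
      rw [hmr]; push_cast; field_simp; ring
    rw [e1, Real.sin_add_nat_mul_pi, mul_pow, ← pow_mul, mul_comm (r+1) 2, pow_mul]
    simp only [even_two, Even.neg_pow, one_pow, one_mul]
    rcases abs_choice ((i:ℝ) - n) with e | e <;> rw [e]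
    rw [neg_mul, neg_div, Real.sin_neg, neg_sq]
  set j := |(i:ℝ) - n| with hjd
  have hlow : 2 * j / (2 * n + 1) ≤ Real.sin (j * Real.pi / (2 * n + 1)) := by
    have := Real.mul_le_sin (x := j * Real.pi / (2 * n + 1)) (by positivity) (by
      rw [div_le_div_iff₀ (by positivity) (by norm_num)]
      nlinarith [Real.pi_pos])
    refine le_trans (le_of_eq ?_) this
    have := Real.pi_ne_zero
    field_simp
  have hlow2 : (2 * j / (3 * n)) ^ 2 ≤ Real.sin (j * Real.pi / (2 * n + 1)) ^ 2 := by
    refine pow_le_pow_left₀ (by positivity) (le_trans ?_ hlow) 2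
    gcongr; linarith
  have hR : (m:ℝ) / n ≤ 4 * (r + 1) := by
    rw [div_le_iff₀ (by linarith), hmr]
    have : (i:ℝ) - n ≤ n := (le_abs_self _).trans hjn
    nlinarith
  have hy : S ≤ 9 * NodeData.KK * (((r:ℝ) + 1) / j) ^ 2 := by
    have h1 : 4 * (2 * j / (3 * n)) ^ 2 * S ≤ NodeData.KK * (4 * (r + 1)) ^ 2 / n ^ 2 := by
      calc _ ≤ 4 * Real.sin (j * Real.pi / (2 * n + 1)) ^ 2 * S := by gcongr
        _ = (2 * Real.sin (m * Real.pi / (2 * n + 1))) ^ 2 * S := by rw [mul_pow, hsin]; norm_num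
        _ ≤ _ := hM
        _ ≤ _ := by gcongr
    have h2 : S = 4 * (2 * j / (3 * n)) ^ 2 * S * (9 * n ^ 2 / (16 * j ^ 2)) := by field_simp; ring
    rw [h2]
    calc _ ≤ NodeData.KK * (4 * (r + 1)) ^ 2 / n ^ 2 * (9 * n ^ 2 / (16 * j ^ 2)) := by gcongr
      _ = _ := by field_simp; norm_num
  have hyy : ((r:ℝ) + 1) ^ (3/2 : ℝ) * j ^ (-(3/2) : ℝ) = (((r:ℝ) + 1) / j) ^ (3/2 : ℝ) := by
    rw [Real.rpow_neg (by positivity), Real.div_rpow (by positivity) (by positivity)]; rfl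
  rw [mul_assoc, hyy]
  have hy0 : 0 < ((r:ℝ) + 1) / j := by positivity
  rcases le_total (((r:ℝ) + 1) / j) 1 with hy1 | hy1
  · refine hy.trans ?_
    gcongr
    rw [← Real.rpow_natCast]
    exact Real.rpow_le_rpow_of_exponent_ge hy0 hy1 (by norm_num)
  · have := Real.one_le_rpow hy1 (show (0:ℝ) ≤ 3/2 by norm_num)
    nlinarith

lemma sum_blocks (F : ℕ → ℝ) (q Q : ℕ) :
    ∑ t ∈ Finset.range (Q * q), F t = ∑ r ∈ Finset.range Q, ∑ i ∈ Finset.range q, F (r * q + i) := by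
  induction Q with
  | zero => simp
  | succ Q ih => rw [Nat.succ_mul, Finset.sum_range_add, ih, Finset.sum_range_succ]

lemma summ32 : Summable fun k : ℕ => ((k:ℝ) + 1) ^ (-(3/2) : ℝ) := by
  have h := (summable_nat_add_iff 1).2 (Real.summable_nat_rpow.2 (show (-(3/2) : ℝ) < -1 by norm_num))
  simpa using h

/-- zeta value -/
noncomputable def ZZ : ℝ := ∑' k : ℕ, ((k:ℝ) + 1) ^ (-(3/2) : ℝ)

lemma sum32_le (N : ℕ) : ∑ k ∈ Finset.range N, ((k:ℝ) + 1) ^ (-(3/2) : ℝ) ≤ ZZ :=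
  summ32.sum_le_tsum _ (fun _ _ => by positivity)

lemma ZZ_nonneg : 0 ≤ ZZ := by simpa using sum32_le 0

lemma sum_hh (n : ℕ) : ∑ i ∈ Finset.range (2 * n + 1), hh n i ≤ 2 * ZZ + 1 := by
  rw [show 2 * n + 1 = n + (n + 1) by ring, Finset.sum_range_add, Finset.sum_range_succ']
  have h1 : ∑ i ∈ Finset.range n, hh n i ≤ ZZ := by
    rw [← Finset.sum_range_reflect]
    refine le_trans (le_of_eq ?_) (sum32_le n)
    apply Finset.sum_congr rfl
    intro k hk
    have hk := Finset.mem_range.1 hk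
    have e : ((n - 1 - k : ℕ) : ℝ) - n = -((k:ℝ) + 1) := by
      rw [Nat.cast_sub (by omega), Nat.cast_sub (by omega)]; push_cast; ring
    rw [hh, e, abs_neg, abs_of_pos (by positivity), max_eq_right (by linarith [(Nat.cast_nonneg k : (0:ℝ) ≤ k)])]
  have h2 : ∑ k ∈ Finset.range n, hh n (n + (k + 1)) ≤ ZZ := by
    refine le_trans (le_of_eq ?_) (sum32_le n)
    apply Finset.sum_congr rfl
    intro k hk
    have e : ((n + (k + 1) : ℕ) : ℝ) - n = (k:ℝ) + 1 := by push_cast; ring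
    rw [hh, e, abs_of_pos (by positivity), max_eq_right (by linarith [(Nat.cast_nonneg k : (0:ℝ) ≤ k)])]
  have h3 : hh n (n + 0) = 1 := by simp [hh]
  linarith

lemma block_bound (E B : ℝ) (c : ℕ → ℝ) (n : ℕ) (hB : 0 ≤ B) (hc : HasSum c E) (h0 : ∀ m, m < n + 1 → c m = 0)
    (hb : ∀ r i, i < 2 * n + 1 → |c (n + 1 + (r * (2 * n + 1) + i))| ≤ B * (((r:ℝ) + 1) ^ (-(3/2) : ℝ) * hh n i)) :
    |E| ≤ B * (ZZ * (2 * ZZ + 1)) := by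
  have h1 : HasSum (fun t => c (n + 1 + t)) E := by
    have := (hasSum_nat_add_iff' (f := c) (n + 1)).2 hc
    rw [Finset.sum_eq_zero (fun m hm => h0 m (Finset.mem_range.1 hm)), sub_zero] at this
    simpa [add_comm] using this
  have h2 : Filter.Tendsto (fun Q : ℕ => Q * (2 * n + 1)) Filter.atTop Filter.atTop :=
    Filter.tendsto_atTop_mono (fun Q => Nat.le_mul_of_pos_right Q (by omega)) Filter.tendsto_id
  have h3 := (h1.tendsto_sum_nat.comp h2).abs
  refine le_of_tendsto h3 (Filter.Eventually.of_forall fun Q => ?_)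
  simp only [Function.comp]
  rw [sum_blocks]
  have hZ := ZZ_nonneg
  calc _ ≤ ∑ r ∈ Finset.range Q, ∑ i ∈ Finset.range (2 * n + 1), B * (((r:ℝ) + 1) ^ (-(3/2) : ℝ) * hh n i) := by
        refine (Finset.abs_sum_le_sum_abs _ _).trans (Finset.sum_le_sum fun r _ => ?_)
        refine (Finset.abs_sum_le_sum_abs _ _).trans (Finset.sum_le_sum fun i hi => ?_)
        exact hb r i (Finset.mem_range.1 hi)
    _ = B * ((∑ r ∈ Finset.range Q, ((r:ℝ) + 1) ^ (-(3/2) : ℝ)) * ∑ i ∈ Finset.range (2 * n + 1), hh n i) := by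
        rw [Finset.sum_mul_sum, Finset.mul_sum]
        simp only [Finset.mul_sum]
    _ ≤ _ := by
        apply mul_le_mul_of_nonneg_left _ hB
        exact mul_le_mul (sum32_le Q) (sum_hh n) (Finset.sum_nonneg fun i _ => (hh_pos n i).le) hZ

lemma term_bound (n r i m : ℕ) (hn : 1 ≤ n) (hi : i < 2 * n + 1) (hm : m = n + 1 + (r * (2 * n + 1) + i))
    (s A a e I S : ℝ) (hs : 2 ≤ s) (hA : 0 ≤ A) (ha : |a| ≤ A * (m:ℝ) ^ (-s - 1)) (he : e = I - S)
    (hI : |I| ≤ 4 / (m:ℝ) ^ 2) (hS : |S| ≤ 9 * NodeData.KK * ((r:ℝ) + 1) ^ (3/2 : ℝ) * hh n i) :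
    |a * e| ≤ A * (9 * NodeData.KK + 4) * (n:ℝ) ^ (-s - 1) * (((r:ℝ) + 1) ^ (-(3/2) : ℝ) * hh n i) := by
  have hK := KK_ge
  have hh0 := hh_pos n i
  have hn0 : (1:ℝ) ≤ n := by exact_mod_cast hn
  have hr0 : (0:ℝ) ≤ r := Nat.cast_nonneg r
  have hr1 : 1 ≤ ((r:ℝ) + 1) ^ (3/2 : ℝ) := Real.one_le_rpow (by linarith) (by norm_num)
  have hnm : (r + 1) * n ≤ m := by rw [hm]; nlinarith
  have hnm' : ((r:ℝ) + 1) * n ≤ m := by exact_mod_cast hnm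
  have hmn : (n:ℝ) ≤ m := by nlinarith
  have hhn : 1 / (m:ℝ) ^ 2 ≤ hh n i := by
    have h1 : (n:ℝ) ^ (-2 : ℝ) ≤ hh n i := by
      have hjn : |(i:ℝ) - n| ≤ n := by
        have : |(i:ℤ) - n| ≤ n := abs_le.2 ⟨by omega, by omega⟩
        exact_mod_cast this
      calc (n:ℝ) ^ (-2 : ℝ) ≤ (n:ℝ) ^ (-(3/2) : ℝ) := Real.rpow_le_rpow_of_exponent_le hn0 (by norm_num)
        _ ≤ _ := Real.rpow_le_rpow_of_nonpos (lt_max_of_lt_left one_pos) (max_le hn0 hjn) (by norm_num)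
    refine le_trans ?_ h1
    rw [Real.rpow_neg (by positivity), Real.rpow_two, one_div]
    gcongr
  have he' : |e| ≤ (9 * NodeData.KK + 4) * (((r:ℝ) + 1) ^ (3/2 : ℝ) * hh n i) := by
    rw [he]
    have h2 : |I| ≤ 4 * (((r:ℝ) + 1) ^ (3/2 : ℝ) * hh n i) := by
      calc |I| ≤ 4 * (1 / (m:ℝ) ^ 2) := by rw [mul_one_div]; exact hI
        _ ≤ 4 * (1 * hh n i) := by rw [one_mul]; gcongr
        _ ≤ _ := by gcongr
    have := abs_sub I S
    linarith
  have hms : (m:ℝ) ^ (-s - 1) ≤ ((r:ℝ) + 1) ^ (-3 : ℝ) * (n:ℝ) ^ (-s - 1) := by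
    calc _ ≤ (((r:ℝ) + 1) * n) ^ (-s - 1) := Real.rpow_le_rpow_of_nonpos (by positivity) hnm' (by linarith)
      _ = ((r:ℝ) + 1) ^ (-s - 1) * (n:ℝ) ^ (-s - 1) := Real.mul_rpow (by positivity) (by positivity)
      _ ≤ _ := by
        gcongr
        · linarith
        · linarith
  have hcomb : ((r:ℝ) + 1) ^ (-3 : ℝ) * ((r:ℝ) + 1) ^ (3/2 : ℝ) = ((r:ℝ) + 1) ^ (-(3/2) : ℝ) := by
    rw [← Real.rpow_add (by positivity)]; norm_num
  rw [abs_mul]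
  calc _ ≤ (A * (((r:ℝ) + 1) ^ (-3 : ℝ) * (n:ℝ) ^ (-s - 1))) *
        ((9 * NodeData.KK + 4) * (((r:ℝ) + 1) ^ (3/2 : ℝ) * hh n i)) := by
        refine mul_le_mul (ha.trans ?_) he' (abs_nonneg _) (by positivity)
        gcongr
    _ = A * (9 * NodeData.KK + 4) * (n:ℝ) ^ (-s - 1) *
        ((((r:ℝ) + 1) ^ (-3 : ℝ) * ((r:ℝ) + 1) ^ (3/2 : ℝ)) * hh n i) := by ring
    _ = _ := by rw [hcomb]

end part6

/-- If `f` is continuous on `[-1,1]` and of class `X^s` with `s ≥ 2`, then the error of the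
`n`-point Gauss rule is `O(n^{-s-1})`. -/
theorem gauss_rate (s : ℝ) (hs : 2 ≤ s) (f : ℝ → ℝ)
    (hf : ContinuousOn f (Set.Icc (-1) 1))
    (hXs : ∃ A : ℝ, ∀ m : ℕ, 1 ≤ m → |chebCoeff f m| ≤ A * (m : ℝ) ^ (-s - 1)) :
    ∃ C > 0, ∀ n : ℕ, 1 ≤ n → ∀ x w : Fin n → ℝ,
      (∀ k, x k ∈ Set.Icc (-1:ℝ) 1) → (∀ k, 0 < w k) →
      (∀ p : Polynomial ℝ, p.natDegree ≤ 2 * n - 1 →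
        ∑ k : Fin n, w k * p.eval (x k) = ∫ t in (-1:ℝ)..1, p.eval t) →
      |(∫ t in (-1:ℝ)..1, f t) - ∑ k : Fin n, w k * f (x k)| ≤ C * (n : ℝ) ^ (-s - 1) := by
  obtain ⟨A, hA⟩ := hXs
  have hA0 : 0 ≤ A := by
    have := hA 1 le_rfl
    simp at this
    exact (abs_nonneg _).trans this
  have hsum : Summable fun m : ℕ => |chebCoeff f m| := by
    rw [← summable_nat_add_iff 1]
    refine Summable.of_nonneg_of_le (fun _ => abs_nonneg _) (fun m => hA (m + 1) (by omega)) ?_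
    have h := (summable_nat_add_iff 1).2 (Real.summable_nat_rpow.2 (show -s - 1 < -1 by linarith))
    exact h.mul_left A
  have hZ := ZZ_nonneg
  have hK := KK_ge
  refine ⟨A * (9 * NodeData.KK + 4) * (ZZ * (2 * ZZ + 1)) + 1, by positivity, ?_⟩
  intro n hn x w hx hw ex
  have hn0 : (0:ℝ) < n := by exact_mod_cast hn
  have hG : IsGauss n x w := ⟨hx, hw, fun p hp => by rw [polyInt_apply]; exact ex p hp⟩
  obtain ⟨θ, v, hN, hF⟩ := exists_nodeData hG hn
  have hE := error_hasSum f hf hsum hn x w hx ex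
  have hb := block_bound _ (A * (9 * NodeData.KK + 4) * (n:ℝ) ^ (-s - 1)) _ n (by positivity) hE ?_ ?_
  · refine hb.trans ?_
    have : 0 < (n:ℝ) ^ (-s - 1) := Real.rpow_pos_of_pos hn0 _
    nlinarith
  · intro m hm
    rw [ex, sub_self, mul_zero]
    rw [Polynomial.Chebyshev.natDegree_T]
    simp
    omega
  · intro r i hi
    have hm2 : 2 ≤ n + 1 + (r * (2 * n + 1) + i) := by omega
    refine term_bound n r i _ hn hi rfl s A _ _ _ _ hs hA0 (hA _ (by omega)) rfl (int_T _ hm2) ?_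
    have h1 := hF (fun t => (Polynomial.Chebyshev.T ℝ ((n + 1 + (r * (2 * n + 1) + i) : ℕ) : ℤ)).eval t)
    simp only [Polynomial.Chebyshev.T_real_cos, Int.cast_natCast] at h1
    rw [h1]
    exact S_bound hN hn r i hi _ rfl
end
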